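/- arXiv:1411.3233 — 3 statements merged into one kernel-verified Lean document; each statement's English description precedes it below -/
import Mathlib

section
/- Let (W,S) be a Coxeter group with S finite and let * be an involutive automorphism of W preserving S. Let I_* = {w ∈ W : w* = w⁻¹} be the set of twisted involutions. Then there is a unique function φ : I_* → ℕ such that φ(1) = 0 and for any w ∈ I_* and s ∈ S with sw < w (Bruhat order), φ(w) = φ(sw) + 1 if sw = ws*, and φ(w) = φ(sws*) if sw ≠ ws*. -/
/-!
Let `ρ` be the geometric representation of `W` and let `θ` be the permutation of the simple roots
induced by `*`, so that `ρ(w*) = θ ρ(w) θ⁻¹`. The height function is `φ(w) = tr ((1 - ρ(w)) θ) / 2`;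
the trace makes sense in infinite rank because `1 - ρ(w)` has finite rank. Passing from `w` to
`s w s*` conjugates `ρ(w) θ` by `ρ(s)`, which does not change the trace. If `s w = w s*` and
`s w < w`, then `ρ(w) θ` sends the simple root of `s` to its negative, and multiplying by the
reflection `ρ(s)` lowers `φ` by one.

One of these two reductions applies to every twisted involution `w ≠ 1` and shortens it: by the
exchange property, `s w < w` and `s w ≠ w s*` force `s w s* < s w`. Hence `φ` takes values in `ℕ`
and is the only solution of the recursion.
-/

namespace GeometricRepresentation

open Polynomial Polynomial.Chebyshev Real

section ChebyshevAngle

variable {m : ℕ}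

theorem sin_pi_div_pos (hm : 2 ≤ m) : 0 < sin (π / m) := by
  have hm' : (1 : ℝ) < m := by exact_mod_cast hm
  exact sin_pos_of_pos_of_lt_pi (by positivity) (div_lt_self pi_pos hm')

theorem chebyshev_S_nonneg (hm : m ≠ 1) {n : ℤ} (hn : -1 ≤ n) (hnm : m = 0 ∨ n < m) :
    0 ≤ (S ℝ n).eval (2 * cos (π / m)) := by
  have hn' : (0 : ℝ) ≤ n + 1 := by exact_mod_cast (by lia : 0 ≤ n + 1)
  obtain rfl | hm0 := eq_or_ne m 0
  · simpa using hn'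
  have hnm' : (n + 1 : ℝ) ≤ m := by exact_mod_cast (by lia : n + 1 ≤ (m : ℤ))
  have hangle : (n + 1) * (π / m) ≤ π := by
    rw [mul_div_assoc', div_le_iff₀ (by positivity), mul_comm π]
    gcongr
  refine nonneg_of_mul_nonneg_left ?_ (sin_pi_div_pos (m := m) (by lia))
  rw [S_two_mul_real_cos]
  exact sin_nonneg_of_nonneg_of_le_pi (by positivity) hangle

theorem dvd_of_chebyshev_S_eval (hm : m ≠ 1) {n : ℕ}
    (hS : (S ℝ (2 * n)).eval (2 * cos (π / m)) = 1)
    (hS' : (S ℝ (2 * n - 1)).eval (2 * cos (π / m)) = 0) : m ∣ n := by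
  obtain rfl | hm0 := eq_or_ne m 0
  · have hn : n = 0 := by simpa using hS'
    simp [hn]
  have hsin : sin (π / m) ≠ 0 := (sin_pi_div_pos (by lia)).ne'
  have hsin_two_mul : sin (2 * n * (π / m)) = 0 := by
    simpa [hS'] using (S_two_mul_real_cos (π / m) (2 * n - 1)).symm
  have hcos_two_mul : cos (2 * n * (π / m)) = 1 := by
    have h := S_two_mul_real_cos (π / m) (2 * n)
    push_cast at h
    rw [hS, add_mul, sin_add, hsin_two_mul, zero_mul, zero_add, one_mul (π / m)] at h
    exact (mul_eq_right₀ hsin).mp (by rw [← h, one_mul])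
  obtain ⟨z, hz⟩ := (cos_eq_one_iff _).mp hcos_two_mul
  have hzn : (z * m : ℝ) = n := by
    field_simp at hz
    linarith
  exact Int.natCast_dvd_natCast.mp ⟨z, by rw [mul_comm]; exact_mod_cast hzn.symm⟩

theorem sin_two_pi_div_pos (hm : 3 ≤ m) : 0 < sin (2 * π / m) := by
  have hm' : (2 : ℝ) < m := by exact_mod_cast hm
  refine sin_pos_of_pos_of_lt_pi (by positivity) ?_
  rw [div_lt_iff₀ (by positivity), mul_comm]
  gcongr

theorem chebyshev_S_eval_eq_zero_of_eq_two_mul (hm : 3 ≤ m) {k : ℕ} (hk : m = 2 * k) :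
    (S ℝ (k - 1)).eval (2 * cos (2 * π / m)) = 0 := by
  refine (mul_eq_zero_iff_right (sin_two_pi_div_pos hm).ne').mp ?_
  have hk0 : (k : ℝ) ≠ 0 := by exact_mod_cast (by lia : k ≠ 0)
  have hangle : (k : ℝ) * (2 * π / (2 * k)) = π := by field_simp
  rw [S_two_mul_real_cos, hk]
  push_cast
  rw [sub_add_cancel, hangle, sin_pi]

theorem chebyshev_S_eval_add_eval_eq_zero_of_eq_two_mul_add_one (hm : 3 ≤ m) {k : ℕ}
    (hk : m = 2 * k + 1) :
    (S ℝ k).eval (2 * cos (2 * π / m)) + (S ℝ (k - 1)).eval (2 * cos (2 * π / m)) = 0 := by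
  refine (mul_eq_zero_iff_right (sin_two_pi_div_pos hm).ne').mp ?_
  have hangle : ((k : ℝ) + 1) * (2 * π / (2 * k + 1)) = 2 * π - k * (2 * π / (2 * k + 1)) := by
    field_simp
    ring
  rw [add_mul, S_two_mul_real_cos, S_two_mul_real_cos, hk]
  push_cast
  rw [sub_add_cancel, hangle, sin_two_pi_sub, neg_add_cancel]

end ChebyshevAngle

section TwoReflections

variable {V : Type*} [AddCommGroup V] [Module ℝ V] {x y : V} {f g : Module.Dual ℝ V}

theorem reflection_mul_reflection_pow_eq_one (hf : f x = 2) (hg : g y = 2) {m : ℕ} (hm : 3 ≤ m)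
    (hfg : f y * g x = (2 * cos (π / m)) ^ 2) :
    (Module.reflection hf * Module.reflection hg) ^ m = 1 := by
  have ht : 2 * cos (2 * π / m) = f y * g x - 2 := by
    rw [hfg, mul_div_assoc, cos_two_mul]
    ring
  ext z
  rw [Module.reflection_mul_reflection_pow_apply hf hg m z _ ht]
  obtain ⟨k, hk | hk⟩ := m.even_or_odd'
  · have h₁ : ((m : ℤ) - 2) / 2 = k - 1 := by lia
    have h₂ : ((m : ℤ) - 1) / 2 = k - 1 := by lia
    simp [h₁, h₂, chebyshev_S_eval_eq_zero_of_eq_two_mul hm hk]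
  · have h₁ : ((m : ℤ) - 1) / 2 = k := by lia
    have h₂ : ((m : ℤ) - 2) / 2 = k - 1 := by lia
    have h₃ : ((m : ℤ) - 3) / 2 = k - 1 := by lia
    have h₄ : (m : ℤ) / 2 = k := by lia
    simp [h₁, h₂, h₃, h₄, chebyshev_S_eval_add_eval_eq_zero_of_eq_two_mul_add_one hm hk]

theorem commute_reflection_reflection (hf : f x = 2) (hg : g y = 2) (hfy : f y = 0)
    (hgx : g x = 0) : Commute (Module.reflection hf) (Module.reflection hg) := by
  ext z
  simp only [LinearEquiv.mul_apply, Module.reflection_apply, map_sub, map_smul, hfy, hgx]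
  module

end TwoReflections

section Form

variable {B : Type*} (M : CoxeterMatrix B)

/-- The simple root `αᵢ`, as a basis vector of the free real vector space on the index set. -/
noncomputable def simpleRoot (i : B) : B →₀ ℝ := Finsupp.single i 1

theorem simpleRoot_apply_self (i : B) : simpleRoot i i = 1 :=
  Finsupp.single_eq_same

theorem simpleRoot_apply_of_ne {i j : B} (h : i ≠ j) : simpleRoot j i = 0 :=
  Finsupp.single_eq_of_ne h

theorem simpleRoot_nonneg (i : B) : 0 ≤ simpleRoot i :=
  Finsupp.single_nonneg.mpr zero_le_one

/-- Twice the Tits form, so that every simple root has square length `2`. An infinite order is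
encoded by `M i j = 0`, and then `cos (π / 0) = cos 0 = 1` is the correct value. -/
noncomputable def titsForm : (B →₀ ℝ) →ₗ[ℝ] (B →₀ ℝ) →ₗ[ℝ] ℝ :=
  Finsupp.linearCombination ℝ fun i =>
    Finsupp.linearCombination ℝ fun j => -(2 * cos (π / M i j))

theorem titsForm_simpleRoot (i j : B) :
    titsForm M (simpleRoot i) (simpleRoot j) = -(2 * cos (π / M i j)) := by
  simp [titsForm, simpleRoot]

theorem titsForm_simpleRoot_self (i : B) : titsForm M (simpleRoot i) (simpleRoot i) = 2 := by
  simp [titsForm_simpleRoot]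

theorem titsForm_comm (x y : B →₀ ℝ) : titsForm M x y = titsForm M y x := by
  suffices h : titsForm M = (titsForm M).flip from LinearMap.congr_fun₂ h x y
  ext i j
  simp [titsForm, M.symmetric i j]

/-- The reflection `x ↦ x - (x, αᵢ) αᵢ` in a simple root. -/
noncomputable def simpleReflection (i : B) : (B →₀ ℝ) ≃ₗ[ℝ] (B →₀ ℝ) :=
  Module.reflection (titsForm_simpleRoot_self M i)

theorem simpleReflection_apply (i : B) (x : B →₀ ℝ) :
    simpleReflection M i x = x - titsForm M (simpleRoot i) x • simpleRoot i :=
  Module.reflection_apply _ _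

theorem simpleReflection_simpleRoot_self (i : B) :
    simpleReflection M i (simpleRoot i) = -simpleRoot i :=
  Module.reflection_apply_self _

theorem simpleReflection_mul_self (i : B) : simpleReflection M i * simpleReflection M i = 1 :=
  LinearEquiv.ext (Module.involutive_reflection (titsForm_simpleRoot_self M i))

theorem titsForm_simpleReflection (i : B) (x y : B →₀ ℝ) :
    titsForm M (simpleReflection M i x) (simpleReflection M i y) = titsForm M x y := by
  simp only [simpleReflection_apply, map_sub, map_smul, LinearMap.sub_apply, LinearMap.smul_apply,
    smul_eq_mul, titsForm_simpleRoot_self, titsForm_comm M x (simpleRoot i)]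
  ring

theorem isLiftable_simpleReflection : M.IsLiftable (simpleReflection M) := by
  intro i j
  obtain rfl | hij := eq_or_ne i j
  · rw [M.diagonal, pow_one, simpleReflection_mul_self]
  have hne_one : M i j ≠ 1 := M.off_diagonal i j hij
  obtain h0 | h2 | h3 : M i j = 0 ∨ M i j = 2 ∨ 3 ≤ M i j := by lia
  · rw [h0, pow_zero]
  · have horth : titsForm M (simpleRoot i) (simpleRoot j) = 0 := by simp [titsForm_simpleRoot, h2]
    have hcomm : Commute (simpleReflection M i) (simpleReflection M j) :=
      commute_reflection_reflection _ _ horth (titsForm_comm M _ _ ▸ horth)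
    rw [h2, hcomm.mul_pow, pow_two, pow_two, simpleReflection_mul_self, simpleReflection_mul_self,
      one_mul]
  · refine reflection_mul_reflection_pow_eq_one _ _ h3 ?_
    rw [titsForm_comm M (simpleRoot j), titsForm_simpleRoot]
    ring

end Form

section Words

variable {B W : Type*} [Group W] {M : CoxeterMatrix B} (cs : CoxeterSystem M W)

open CoxeterSystem

theorem isReduced_of_length_mul_wordProd {v : W} {ω : List B}
    (h : cs.length (v * cs.wordProd ω) = cs.length v + ω.length) : cs.IsReduced ω := by
  have := cs.length_mul_le v (cs.wordProd ω)
  have := cs.length_wordProd_le ω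
  unfold CoxeterSystem.IsReduced
  lia

theorem exists_eq_mul_alternatingWord (w : W) (i j : B) (hi : ¬cs.IsRightDescent w i) :
    ∃ v k, w = v * cs.wordProd (alternatingWord i j k) ∧ cs.length w = cs.length v + k ∧
      ¬cs.IsRightDescent v i ∧ ¬cs.IsRightDescent v j := by
  induction hn : cs.length w using Nat.strong_induction_on generalizing w i j with
  | _ n ih =>
  subst hn
  by_cases hj : cs.IsRightDescent w j
  · obtain ⟨v, k, hw, hlen, hvj, hvi⟩ := ih _ hj (w * cs.simple j) j i
      (cs.isRightDescent_iff_not_isRightDescent_mul.mp hj) rfl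
    refine ⟨v, k + 1, ?_, ?_, hvi, hvj⟩
    · rw [alternatingWord_succ, cs.wordProd_concat, ← mul_assoc, ← hw,
        cs.simple_mul_simple_cancel_right]
    · rw [← cs.isRightDescent_iff.mp hj, hlen, add_assoc]
  · exact ⟨w, 0, by simp [alternatingWord], rfl, hi, hj⟩

theorem coxeterMatrix_eq_zero_or_lt_of_not_isRightDescent {v : W} {i j : B} {k : ℕ}
    (hlen : cs.length (v * cs.wordProd (alternatingWord i j k)) = cs.length v + k)
    (hi : ¬cs.IsRightDescent (v * cs.wordProd (alternatingWord i j k)) i) :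
    M i j = 0 ∨ k < M i j := by
  have hreduced : cs.IsReduced (alternatingWord j i (k + 1)) := by
    refine isReduced_of_length_mul_wordProd cs (v := v) ?_
    rw [alternatingWord_succ, cs.wordProd_concat, ← mul_assoc, cs.not_isRightDescent_iff.mp hi,
      hlen, List.length_concat, length_alternatingWord, add_assoc]
  by_contra! hk
  refine cs.not_isReduced_alternatingWord j i (m := k + 1) ?_ ?_ hreduced <;>
    rw [M.symmetric j i] <;> lia

end Words

section Representation

variable {B W : Type*} [Group W] {M : CoxeterMatrix B} (cs : CoxeterSystem M W)

open CoxeterSystem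

/-- The geometric representation of a Coxeter group, in which the simple generator `sᵢ` acts as
the reflection in the simple root `αᵢ`. -/
noncomputable def geometricRep : W →* (B →₀ ℝ) ≃ₗ[ℝ] (B →₀ ℝ) :=
  cs.lift ⟨simpleReflection M, isLiftable_simpleReflection M⟩

theorem geometricRep_simple (i : B) : geometricRep cs (cs.simple i) = simpleReflection M i :=
  cs.lift_apply_simple (isLiftable_simpleReflection M) i

theorem geometricRep_simple_mul_apply (i : B) (w : W) (x : B →₀ ℝ) :
    geometricRep cs (cs.simple i * w) x = simpleReflection M i (geometricRep cs w x) := by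
  rw [map_mul, LinearEquiv.mul_apply, geometricRep_simple]

theorem geometricRep_mul_simple_apply (w : W) (i : B) (x : B →₀ ℝ) :
    geometricRep cs (w * cs.simple i) x = geometricRep cs w (simpleReflection M i x) := by
  rw [map_mul, LinearEquiv.mul_apply, geometricRep_simple]

theorem titsForm_geometricRep (w : W) (x y : B →₀ ℝ) :
    titsForm M (geometricRep cs w x) (geometricRep cs w y) = titsForm M x y := by
  induction w using cs.simple_induction_left with
  | one => simp
  | mul_simple_left w i ih =>
    rw [geometricRep_simple_mul_apply, geometricRep_simple_mul_apply, titsForm_simpleReflection, ih]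

theorem simpleReflection_smul_add_smul (i j : B) (a b : ℝ) :
    simpleReflection M i (a • simpleRoot i + b • simpleRoot j) =
      (2 * cos (π / M i j) * b - a) • simpleRoot i + b • simpleRoot j := by
  simp only [simpleReflection_apply, map_add, map_smul, titsForm_simpleRoot_self,
    titsForm_simpleRoot]
  module

theorem geometricRep_alternatingWord (i j : B) (k : ℕ) :
    geometricRep cs (cs.wordProd (alternatingWord i j k)) (simpleRoot i) =
      if Even k then
        (S ℝ k).eval (2 * cos (π / M i j)) • simpleRoot i +
          (S ℝ (k - 1)).eval (2 * cos (π / M i j)) • simpleRoot j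
      else
        (S ℝ (k - 1)).eval (2 * cos (π / M i j)) • simpleRoot i +
          (S ℝ k).eval (2 * cos (π / M i j)) • simpleRoot j := by
  induction k with
  | zero => simp [alternatingWord]
  | succ k ih =>
    have hS : (S ℝ (k + 1 : ℕ)).eval (2 * cos (π / M i j)) =
        2 * cos (π / M i j) * (S ℝ k).eval (2 * cos (π / M i j)) -
          (S ℝ (k - 1)).eval (2 * cos (π / M i j)) := by
      simp [S_add_one]
    rw [alternatingWord_succ', cs.wordProd_cons, geometricRep_simple_mul_apply, ih, hS]
    by_cases hk : Even k
    · simp only [hk, Nat.even_add_one, not_true_eq_false, if_true, if_false]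
      rw [add_comm, simpleReflection_smul_add_smul, M.symmetric j i, add_comm]
      simp
    · simp only [hk, Nat.even_add_one, not_false_eq_true, if_true, if_false]
      rw [simpleReflection_smul_add_smul]
      simp

theorem orderOf_simple_mul_simple (i j : B) : orderOf (cs.simple i * cs.simple j) = M i j := by
  obtain rfl | hij := eq_or_ne i j
  · simp
  refine Nat.dvd_antisymm (orderOf_dvd_of_pow_eq_one (cs.simple_mul_simple_pow i j)) ?_
  set n := orderOf (cs.simple i * cs.simple j)
  have hpow : cs.wordProd (alternatingWord i j (2 * n)) = 1 := by
    rw [cs.prod_alternatingWord_eq_mul_pow, if_pos (even_two_mul n), one_mul,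
      Nat.mul_div_cancel_left n two_pos, pow_orderOf_eq_one]
  have hroot := geometricRep_alternatingWord cs i j (2 * n)
  rw [hpow, if_pos (even_two_mul n), map_one, LinearEquiv.coe_one, id] at hroot
  refine dvd_of_chebyshev_S_eval (M.off_diagonal i j hij) (n := n) ?_ ?_
  · simpa [simpleRoot_apply_self, simpleRoot_apply_of_ne hij] using
      (DFunLike.congr_fun hroot i).symm
  · simpa [simpleRoot_apply_self, simpleRoot_apply_of_ne hij.symm] using
      (DFunLike.congr_fun hroot j).symm

/-- Pulling out of `w` the longest right factor in the dihedral subgroup `⟨sᵢ, sⱼ⟩`, where `j` is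
a right descent of `w`, reduces the claim to the explicit action of that subgroup on the plane
spanned by `αᵢ` and `αⱼ`. -/
theorem geometricRep_simpleRoot_nonneg {w : W} {i : B} (hi : ¬cs.IsRightDescent w i) :
    0 ≤ geometricRep cs w (simpleRoot i) := by
  induction hn : cs.length w using Nat.strong_induction_on generalizing w i with
  | _ n ih =>
  subst hn
  obtain rfl | hw := eq_or_ne w 1
  · simpa using simpleRoot_nonneg i
  obtain ⟨j, hj⟩ := cs.exists_rightDescent_of_ne_one hw
  have hij : i ≠ j := by
    rintro rfl
    exact hi hj
  obtain ⟨v, k, rfl, hlen, hvi, hvj⟩ := exists_eq_mul_alternatingWord cs w i j hi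
  have hk : k ≠ 0 := by
    rintro rfl
    exact hvj (by simpa [alternatingWord] using hj)
  have hlt : cs.length v < cs.length (v * cs.wordProd (alternatingWord i j k)) := by lia
  have hkM := coxeterMatrix_eq_zero_or_lt_of_not_isRightDescent cs hlen hi
  have hroot_i := ih _ hlt hvi rfl
  have hroot_j := ih _ hlt hvj rfl
  have hS := chebyshev_S_nonneg (M.off_diagonal i j hij) (n := k) (by lia) (by lia)
  have hS' := chebyshev_S_nonneg (M.off_diagonal i j hij) (n := k - 1) (by lia) (by lia)
  rw [map_mul, LinearEquiv.mul_apply, geometricRep_alternatingWord]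
  split_ifs <;> simp only [map_add, map_smul] <;> positivity

theorem geometricRep_simpleRoot_nonpos {w : W} {i : B} (hi : cs.IsRightDescent w i) :
    geometricRep cs w (simpleRoot i) ≤ 0 := by
  have h := geometricRep_simpleRoot_nonneg cs (cs.isRightDescent_iff_not_isRightDescent_mul.mp hi)
  rwa [geometricRep_mul_simple_apply, simpleReflection_simpleRoot_self, map_neg, neg_nonneg] at h

theorem geometricRep_injective : Function.Injective (geometricRep cs) := by
  refine (injective_iff_map_eq_one _).mpr fun w hw => ?_
  by_contra hne
  obtain ⟨i, hi⟩ := cs.exists_rightDescent_of_ne_one hne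
  have hroot := geometricRep_simpleRoot_nonpos cs hi i
  rw [hw, LinearEquiv.coe_one, id, simpleRoot_apply_self, Finsupp.zero_apply] at hroot
  exact hroot.not_gt one_pos

theorem geometricRep_simpleRoot_eq_neg_of_eq_smul {w : W} {i j : B} (hj : cs.IsRightDescent w j)
    {c : ℝ} (hc : geometricRep cs w (simpleRoot j) = c • simpleRoot i) :
    geometricRep cs w (simpleRoot j) = -simpleRoot i := by
  have hsq : c * c = 1 := by
    have h := titsForm_geometricRep cs w (simpleRoot j) (simpleRoot j)
    simp only [hc, map_smul, LinearMap.smul_apply, titsForm_simpleRoot_self, smul_eq_mul] at h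
    linarith
  have hc_nonpos : c ≤ 0 := by
    have h := geometricRep_simpleRoot_nonpos cs hj i
    rwa [hc, Finsupp.smul_apply, simpleRoot_apply_self, smul_eq_mul, mul_one] at h
  have hc_neg : c = -1 := by nlinarith
  rw [hc, hc_neg, neg_one_smul]

theorem geometricRep_simpleRoot_eq_neg_of_simple_mul_eq {w : W} {i j : B}
    (hj : cs.IsRightDescent w j) (h : cs.simple i * w = w * cs.simple j) :
    geometricRep cs w (simpleRoot j) = -simpleRoot i := by
  set x := geometricRep cs w (simpleRoot j) with hx
  have hneg : x - titsForm M (simpleRoot i) x • simpleRoot i = -x := by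
    rw [← simpleReflection_apply, hx, ← geometricRep_simple_mul_apply, h,
      geometricRep_mul_simple_apply, simpleReflection_simpleRoot_self, map_neg]
  refine geometricRep_simpleRoot_eq_neg_of_eq_smul cs hj
    (c := titsForm M (simpleRoot i) x / 2) ?_
  calc x = (2⁻¹ : ℝ) • (x - -x) := by module
    _ = (titsForm M (simpleRoot i) x / 2) • simpleRoot i := by
      rw [← hneg]
      module

theorem simple_mul_eq_of_geometricRep_simpleRoot_eq_neg {w : W} {i j : B}
    (h : geometricRep cs w (simpleRoot j) = -simpleRoot i) :
    cs.simple i * w = w * cs.simple j := by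
  refine geometricRep_injective cs (LinearEquiv.ext fun x => ?_)
  have hform : titsForm M (simpleRoot i) (geometricRep cs w x) = -titsForm M (simpleRoot j) x := by
    rw [← titsForm_geometricRep cs w (simpleRoot j), h, map_neg, LinearMap.neg_apply, neg_neg]
  rw [geometricRep_simple_mul_apply, geometricRep_mul_simple_apply, simpleReflection_apply,
    simpleReflection_apply, map_sub, map_smul, h, hform, neg_smul, smul_neg]

/-- The vectors `ρ(w) αⱼ ≤ 0` and `ρ(sᵢ w) αⱼ ≥ 0` differ by a multiple of `αᵢ`, so all other
coordinates of `ρ(w) αⱼ` vanish. -/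
theorem simple_mul_eq_of_isRightDescent {w : W} {i j : B} (hj : cs.IsRightDescent w j)
    (hij : ¬cs.IsRightDescent (cs.simple i * w) j) : cs.simple i * w = w * cs.simple j := by
  refine simple_mul_eq_of_geometricRep_simpleRoot_eq_neg cs
    (geometricRep_simpleRoot_eq_neg_of_eq_smul cs hj
      (c := geometricRep cs w (simpleRoot j) i) (Finsupp.ext fun b => ?_))
  obtain rfl | hb := eq_or_ne b i
  · simp [simpleRoot_apply_self]
  have hle := geometricRep_simpleRoot_nonpos cs hj b
  have hge := geometricRep_simpleRoot_nonneg cs hij b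
  rw [geometricRep_simple_mul_apply, simpleReflection_apply, Finsupp.sub_apply, Finsupp.smul_apply,
    simpleRoot_apply_of_ne hb, smul_zero, sub_zero] at hge
  rw [Finsupp.smul_apply, simpleRoot_apply_of_ne hb, smul_zero]
  exact le_antisymm hle hge

end Representation

section DiagonalTrace

variable {B R : Type*} [CommSemiring R]

/-- The diagonal entries of the matrix of an endomorphism of a free module. -/
noncomputable def diagonal (f : Module.End R (B →₀ R)) (b : B) : R := f (Finsupp.single b 1) b

/-- The sum of the diagonal entries of an endomorphism of a free module of arbitrary rank. It is
meaningful, and additive, for endomorphisms with finitely supported diagonal; otherwise it has the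
junk value `0`. -/
noncomputable def diagonalTrace (f : Module.End R (B →₀ R)) : R := ∑ᶠ b, diagonal f b

theorem diagonalTrace_zero : diagonalTrace (0 : Module.End R (B →₀ R)) = 0 := by
  simp [diagonalTrace, diagonal]

theorem diagonalTrace_add {f g : Module.End R (B →₀ R)} (hf : (diagonal f).HasFiniteSupport)
    (hg : (diagonal g).HasFiniteSupport) :
    diagonalTrace (f + g) = diagonalTrace f + diagonalTrace g :=
  finsum_add_distrib hf hg

theorem support_diagonal_smulRight_subset (φ : Module.Dual R (B →₀ R)) (v : B →₀ R) :
    (diagonal (φ.smulRight v)).support ⊆ v.support := by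
  intro b hb
  rw [Finset.mem_coe, Finsupp.mem_support_iff]
  intro hv
  exact hb (by simp [diagonal, hv])

theorem hasFiniteSupport_diagonal_smulRight (φ : Module.Dual R (B →₀ R)) (v : B →₀ R) :
    (diagonal (φ.smulRight v)).HasFiniteSupport :=
  v.support.finite_toSet.subset (support_diagonal_smulRight_subset φ v)

theorem diagonalTrace_smulRight (φ : Module.Dual R (B →₀ R)) (v : B →₀ R) :
    diagonalTrace (φ.smulRight v) = φ v := by
  rw [diagonalTrace, finsum_eq_sum_of_support_subset _ (support_diagonal_smulRight_subset φ v)]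
  conv_rhs => rw [← v.sum_single, Finsupp.sum, map_sum]
  refine Finset.sum_congr rfl fun b _ => ?_
  rw [← mul_one (v b), ← smul_eq_mul, ← Finsupp.smul_single, map_smul]
  simp [diagonal, mul_comm]

end DiagonalTrace

section DiagramAutomorphism

variable {B : Type*} {M : CoxeterMatrix B} {σ : B → B}

theorem lmapDomain_simpleRoot (i : B) :
    Finsupp.lmapDomain ℝ ℝ σ (simpleRoot i) = simpleRoot (σ i) :=
  Finsupp.mapDomain_single

theorem titsForm_simpleRoot_lmapDomain (hσ : ∀ i j, M (σ i) (σ j) = M i j) (i : B) :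
    titsForm M (simpleRoot (σ i)) ∘ₗ Finsupp.lmapDomain ℝ ℝ σ = titsForm M (simpleRoot i) := by
  refine Finsupp.lhom_ext' fun j => LinearMap.ext_ring ?_
  change titsForm M _ (Finsupp.lmapDomain ℝ ℝ σ (simpleRoot j)) = titsForm M _ (simpleRoot j)
  rw [lmapDomain_simpleRoot, titsForm_simpleRoot, titsForm_simpleRoot, hσ]

end DiagramAutomorphism

section HalfTraceDefect

variable {B W : Type*} [Group W] {M : CoxeterMatrix B} (cs : CoxeterSystem M W) (σ : B → B)

/-- The endomorphism `(1 - ρ(w)) θ`, where `ρ` is the geometric representation and `θ` is the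
linear map sending each simple root `αᵢ` to `α_{σ i}`. -/
noncomputable def twistDefect (w : W) : Module.End ℝ (B →₀ ℝ) :=
  Finsupp.lmapDomain ℝ ℝ σ - (geometricRep cs w).toLinearMap ∘ₗ Finsupp.lmapDomain ℝ ℝ σ

/-- Half the trace of `(1 - ρ(w)) θ`, which will be the value at `w` of the height function on
twisted involutions. When `θ` and `ρ(w) θ` are involutions of a finite-dimensional space, it is the
dimension of the `-1`-eigenspace of `ρ(w) θ` minus that of `θ`. -/
noncomputable def halfTraceDefect (w : W) : ℝ := diagonalTrace (twistDefect cs σ w) / 2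

theorem twistDefect_one : twistDefect cs σ 1 = 0 := by
  ext
  simp [twistDefect]

theorem twistDefect_simple_mul (i : B) (w : W) :
    twistDefect cs σ (cs.simple i * w) = twistDefect cs σ w +
      (titsForm M (simpleRoot i) ∘ₗ (geometricRep cs w).toLinearMap ∘ₗ
        Finsupp.lmapDomain ℝ ℝ σ).smulRight (simpleRoot i) := by
  refine LinearMap.ext fun x => ?_
  simp only [twistDefect, LinearMap.sub_apply, LinearMap.add_apply, LinearMap.comp_apply,
    LinearEquiv.coe_coe, LinearMap.smulRight_apply, geometricRep_simple_mul_apply,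
    simpleReflection_apply]
  abel

theorem twistDefect_mul_simple {σ : B → B} (hσ : ∀ i j, M (σ i) (σ j) = M i j) (w : W) (i : B) :
    twistDefect cs σ (w * cs.simple (σ i)) = twistDefect cs σ w +
      (titsForm M (simpleRoot i)).smulRight (geometricRep cs w (simpleRoot (σ i))) := by
  rw [← titsForm_simpleRoot_lmapDomain hσ]
  refine LinearMap.ext fun x => ?_
  simp only [twistDefect, LinearMap.sub_apply, LinearMap.add_apply, LinearMap.comp_apply,
    LinearEquiv.coe_coe, LinearMap.smulRight_apply, geometricRep_mul_simple_apply,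
    simpleReflection_apply, map_sub, map_smul]
  abel

theorem hasFiniteSupport_diagonal_twistDefect (w : W) :
    (diagonal (twistDefect cs σ w)).HasFiniteSupport := by
  induction w using cs.simple_induction_left with
  | one =>
    rw [twistDefect_one]
    exact Function.hasFiniteSupport_fun_zero
  | mul_simple_left w i ih =>
    rw [twistDefect_simple_mul]
    exact ih.add (hasFiniteSupport_diagonal_smulRight _ _)

theorem halfTraceDefect_one : halfTraceDefect cs σ 1 = 0 := by
  rw [halfTraceDefect, twistDefect_one, diagonalTrace_zero, zero_div]

theorem halfTraceDefect_simple_mul (i : B) (w : W) :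
    halfTraceDefect cs σ (cs.simple i * w) = halfTraceDefect cs σ w +
      titsForm M (simpleRoot i) (geometricRep cs w (simpleRoot (σ i))) / 2 := by
  rw [halfTraceDefect, twistDefect_simple_mul,
    diagonalTrace_add (hasFiniteSupport_diagonal_twistDefect cs σ w)
      (hasFiniteSupport_diagonal_smulRight _ _), diagonalTrace_smulRight, add_div,
    LinearMap.comp_apply, LinearMap.comp_apply, lmapDomain_simpleRoot, LinearEquiv.coe_coe,
    halfTraceDefect]

theorem halfTraceDefect_mul_simple {σ : B → B} (hσ : ∀ i j, M (σ i) (σ j) = M i j) (w : W) (i : B) :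
    halfTraceDefect cs σ (w * cs.simple (σ i)) = halfTraceDefect cs σ w +
      titsForm M (simpleRoot i) (geometricRep cs w (simpleRoot (σ i))) / 2 := by
  rw [halfTraceDefect, twistDefect_mul_simple cs hσ,
    diagonalTrace_add (hasFiniteSupport_diagonal_twistDefect cs σ w)
      (hasFiniteSupport_diagonal_smulRight _ _), diagonalTrace_smulRight, add_div, halfTraceDefect]

theorem halfTraceDefect_simple_mul_mul_simple {σ : B → B} (hσ : ∀ i j, M (σ i) (σ j) = M i j)
    (i : B) (w : W) :
    halfTraceDefect cs σ (cs.simple i * w * cs.simple (σ i)) = halfTraceDefect cs σ w := by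
  rw [halfTraceDefect_mul_simple cs hσ, halfTraceDefect_simple_mul, geometricRep_simple_mul_apply,
    simpleReflection_apply, map_sub, map_smul, titsForm_simpleRoot_self, smul_eq_mul]
  ring

theorem halfTraceDefect_eq_add_one {i : B} {w : W}
    (h : geometricRep cs w (simpleRoot (σ i)) = -simpleRoot i) :
    halfTraceDefect cs σ w = halfTraceDefect cs σ (cs.simple i * w) + 1 := by
  rw [halfTraceDefect_simple_mul, h, map_neg, titsForm_simpleRoot_self]
  ring

end HalfTraceDefect

end GeometricRepresentation

namespace TwistedInvolution

open GeometricRepresentation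

section Twist

variable {B W : Type*} [Group W] {M : CoxeterMatrix B} (cs : CoxeterSystem M W) {st : W ≃* W}
  {σ : B → B}

theorem coxeterMatrix_apply_eq_of_twist_simple (hσ : ∀ i, st (cs.simple i) = cs.simple (σ i))
    (i j : B) : M (σ i) (σ j) = M i j := by
  rw [← orderOf_simple_mul_simple cs, ← orderOf_simple_mul_simple cs, ← hσ, ← hσ, ← map_mul,
    MulEquiv.orderOf_eq]

theorem twist_wordProd (hσ : ∀ i, st (cs.simple i) = cs.simple (σ i)) (ω : List B) :
    st (cs.wordProd ω) = cs.wordProd (ω.map σ) := by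
  simp [CoxeterSystem.wordProd, map_list_prod, Function.comp_def, hσ]

theorem length_twist_le (hσ : ∀ i, st (cs.simple i) = cs.simple (σ i)) (w : W) :
    cs.length (st w) ≤ cs.length w := by
  obtain ⟨ω, hω, rfl⟩ := cs.exists_isReduced w
  rw [twist_wordProd cs hσ, hω.eq]
  simpa using cs.length_wordProd_le (ω.map σ)

theorem length_twist (hst : ∀ w, st (st w) = w) (hσ : ∀ i, st (cs.simple i) = cs.simple (σ i))
    (w : W) : cs.length (st w) = cs.length w :=
  (length_twist_le cs hσ w).antisymm (by simpa [hst] using length_twist_le cs hσ (st w))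

theorem isRightDescent_of_isLeftDescent (hst : ∀ w, st (st w) = w)
    (hσ : ∀ i, st (cs.simple i) = cs.simple (σ i)) {w : W} (hw : st w = w⁻¹) {i : B}
    (hi : cs.IsLeftDescent w i) : cs.IsRightDescent w (σ i) := by
  rwa [← cs.isLeftDescent_inv_iff, ← hw, CoxeterSystem.IsLeftDescent, ← hσ, ← map_mul,
    length_twist cs hst hσ, length_twist cs hst hσ]

theorem inv_twist_simple (i : B) : (st (cs.simple i))⁻¹ = st (cs.simple i) := by
  rw [← map_inv, cs.inv_simple]

theorem twist_simple_mul {w : W} (hw : st w = w⁻¹) {i : B}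
    (hcomm : cs.simple i * w = w * st (cs.simple i)) :
    st (cs.simple i * w) = (cs.simple i * w)⁻¹ := by
  rw [map_mul, hw, hcomm, mul_inv_rev, inv_twist_simple]

theorem twist_simple_mul_mul_twist_simple (hst : ∀ w, st (st w) = w) {w : W} (hw : st w = w⁻¹)
    (i : B) : st (cs.simple i * w * st (cs.simple i)) =
      (cs.simple i * w * st (cs.simple i))⁻¹ := by
  rw [map_mul, map_mul, hw, hst, mul_inv_rev, mul_inv_rev, inv_twist_simple, cs.inv_simple,
    mul_assoc]

theorem length_simple_mul_mul_twist_simple_lt (hst : ∀ w, st (st w) = w)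
    (hσ : ∀ i, st (cs.simple i) = cs.simple (σ i)) {w : W} (hw : st w = w⁻¹) {i : B}
    (hi : cs.IsLeftDescent w i) (hncomm : cs.simple i * w ≠ w * st (cs.simple i)) :
    cs.length (cs.simple i * w * st (cs.simple i)) < cs.length w := by
  rw [hσ] at hncomm ⊢
  have hdescent : cs.IsRightDescent (cs.simple i * w) (σ i) := by
    by_contra h
    exact hncomm (simple_mul_eq_of_isRightDescent cs
      (isRightDescent_of_isLeftDescent cs hst hσ hw hi) h)
  exact hdescent.trans hi

theorem twistedInvolution_induction (hst : ∀ w, st (st w) = w)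
    (hσ : ∀ i, st (cs.simple i) = cs.simple (σ i)) {p : ∀ w, st w = w⁻¹ → Prop}
    (one : ∀ h1, p 1 h1)
    (simple_mul : ∀ w hw i, cs.IsLeftDescent w i → cs.simple i * w = w * st (cs.simple i) →
      ∀ h, p (cs.simple i * w) h → p w hw)
    (simple_mul_mul_twist_simple : ∀ w hw i, cs.IsLeftDescent w i →
      cs.simple i * w ≠ w * st (cs.simple i) →
      ∀ h, p (cs.simple i * w * st (cs.simple i)) h → p w hw)
    {w : W} (hw : st w = w⁻¹) : p w hw := by
  induction hn : cs.length w using Nat.strong_induction_on generalizing w with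
  | _ n ih =>
  subst hn
  obtain rfl | hne := eq_or_ne w 1
  · exact one hw
  obtain ⟨i, hi⟩ := cs.exists_leftDescent_of_ne_one hne
  by_cases hcomm : cs.simple i * w = w * st (cs.simple i)
  · have h := twist_simple_mul cs hw hcomm
    exact simple_mul w hw i hi hcomm h (ih _ hi h rfl)
  · have h := twist_simple_mul_mul_twist_simple cs hst hw i
    have hlt := length_simple_mul_mul_twist_simple_lt cs hst hσ hw hi hcomm
    exact simple_mul_mul_twist_simple w hw i hi hcomm h (ih _ hlt h rfl)

theorem halfTraceDefect_eq_simple_mul_add_one (hst : ∀ w, st (st w) = w)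
    (hσ : ∀ i, st (cs.simple i) = cs.simple (σ i)) {w : W} (hw : st w = w⁻¹) {i : B}
    (hi : cs.IsLeftDescent w i) (hcomm : cs.simple i * w = w * st (cs.simple i)) :
    halfTraceDefect cs σ w = halfTraceDefect cs σ (cs.simple i * w) + 1 := by
  refine halfTraceDefect_eq_add_one cs σ (geometricRep_simpleRoot_eq_neg_of_simple_mul_eq cs
    (isRightDescent_of_isLeftDescent cs hst hσ hw hi) ?_)
  rw [hcomm, hσ]

theorem halfTraceDefect_eq_simple_mul_mul_twist_simple
    (hσ : ∀ i, st (cs.simple i) = cs.simple (σ i)) (w : W) (i : B) :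
    halfTraceDefect cs σ w = halfTraceDefect cs σ (cs.simple i * w * st (cs.simple i)) := by
  rw [hσ, halfTraceDefect_simple_mul_mul_simple cs (coxeterMatrix_apply_eq_of_twist_simple cs hσ)]

theorem exists_natCast_eq_halfTraceDefect (hst : ∀ w, st (st w) = w)
    (hσ : ∀ i, st (cs.simple i) = cs.simple (σ i)) (w : {w : W // st w = w⁻¹}) :
    ∃ n : ℕ, (n : ℝ) = halfTraceDefect cs σ w := by
  obtain ⟨w, hw⟩ := w
  induction hw using twistedInvolution_induction cs hst hσ with
  | one => exact ⟨0, by simp [halfTraceDefect_one]⟩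
  | simple_mul w hw i hi hcomm _ ih =>
    obtain ⟨n, hn⟩ := ih
    refine ⟨n + 1, ?_⟩
    rw [halfTraceDefect_eq_simple_mul_add_one cs hst hσ hw hi hcomm, ← hn, Nat.cast_succ]
  | simple_mul_mul_twist_simple w _ i _ _ _ ih =>
    rwa [halfTraceDefect_eq_simple_mul_mul_twist_simple cs hσ w i]

variable (st) in
/-- The recursion characterizing the height function `φ` on twisted involutions: `φ 1 = 0`, and
along a left descent `s` of `w` the value drops by one from `w` to `s w` if `s w = w s*`, and is
the same at `w` and `s w s*` otherwise. -/
def IsTwistedHeight (φ : {w : W // st w = w⁻¹} → ℕ) : Prop :=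
  (∀ h1 : st (1 : W) = (1 : W)⁻¹, φ ⟨1, h1⟩ = 0) ∧
  (∀ w : {w : W // st w = w⁻¹}, ∀ i : B,
    cs.length (cs.simple i * w.1) < cs.length w.1 →
    ((cs.simple i * w.1 = w.1 * st (cs.simple i) →
        ∀ h : st (cs.simple i * w.1) = (cs.simple i * w.1)⁻¹,
          φ w = φ ⟨cs.simple i * w.1, h⟩ + 1) ∧
     (cs.simple i * w.1 ≠ w.1 * st (cs.simple i) →
        ∀ h : st (cs.simple i * w.1 * st (cs.simple i)) =
            (cs.simple i * w.1 * st (cs.simple i))⁻¹,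
          φ w = φ ⟨cs.simple i * w.1 * st (cs.simple i), h⟩)))

theorem isTwistedHeight_of_natCast_eq_halfTraceDefect (hst : ∀ w, st (st w) = w)
    (hσ : ∀ i, st (cs.simple i) = cs.simple (σ i)) {φ : {w : W // st w = w⁻¹} → ℕ}
    (hφ : ∀ w, (φ w : ℝ) = halfTraceDefect cs σ w) : IsTwistedHeight cs st φ := by
  refine ⟨fun h1 => ?_, fun w i hi => ⟨fun hcomm h => ?_, fun _ h => ?_⟩⟩
  · exact_mod_cast (hφ ⟨1, h1⟩).trans (halfTraceDefect_one cs σ)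
  · have hstep := halfTraceDefect_eq_simple_mul_add_one cs hst hσ w.2 hi hcomm
    rw [← hφ w, ← hφ ⟨_, h⟩] at hstep
    exact_mod_cast hstep
  · have hstep := halfTraceDefect_eq_simple_mul_mul_twist_simple cs hσ w.1 i
    rw [← hφ w, ← hφ ⟨_, h⟩] at hstep
    exact_mod_cast hstep

theorem IsTwistedHeight.natCast_eq_halfTraceDefect (hst : ∀ w, st (st w) = w)
    (hσ : ∀ i, st (cs.simple i) = cs.simple (σ i)) {φ : {w : W // st w = w⁻¹} → ℕ}
    (hφ : IsTwistedHeight cs st φ) (w : {w : W // st w = w⁻¹}) :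
    (φ w : ℝ) = halfTraceDefect cs σ w := by
  obtain ⟨w, hw⟩ := w
  induction hw using twistedInvolution_induction cs hst hσ with
  | one h1 => rw [hφ.1 h1, halfTraceDefect_one, Nat.cast_zero]
  | simple_mul w hw i hi hcomm h ih =>
    rw [(hφ.2 ⟨w, hw⟩ i hi).1 hcomm h, Nat.cast_succ, ih,
      halfTraceDefect_eq_simple_mul_add_one cs hst hσ hw hi hcomm]
  | simple_mul_mul_twist_simple w hw i hi hncomm h ih =>
    rw [(hφ.2 ⟨w, hw⟩ i hi).2 hncomm h, ih,
      halfTraceDefect_eq_simple_mul_mul_twist_simple cs hσ w i]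

end Twist

end TwistedInvolution

open TwistedInvolution in
theorem statement0_general {B W : Type*} [Group W] {M : CoxeterMatrix B}
    (cs : CoxeterSystem M W) (st : W ≃* W) (hst_inv : ∀ w, st (st w) = w)
    (hst_S : ∀ i : B, ∃ j : B, st (cs.simple i) = cs.simple j) :
    ∃! φ : {w : W // st w = w⁻¹} → ℕ, IsTwistedHeight cs st φ := by
  choose σ hσ using hst_S
  choose φ hφ using exists_natCast_eq_halfTraceDefect cs hst_inv hσ
  refine ⟨φ, isTwistedHeight_of_natCast_eq_halfTraceDefect cs hst_inv hσ hφ, fun ψ hψ => ?_⟩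
  ext w
  exact_mod_cast (hψ.natCast_eq_halfTraceDefect cs hst_inv hσ w).trans (hφ w).symm

/-- Let `(W, S)` be a Coxeter group with `S` finite, and `st` an involutive
automorphism of `W` preserving the set of simple reflections.  Let
`I_* = {w : st w = w⁻¹}` be the set of twisted involutions.  Then there is a unique function
`φ : I_* → ℕ` with `φ(1) = 0` such that for every `w ∈ I_*` and simple reflection `s` with
`sw < w` (equivalently `ℓ(sw) < ℓ(w)`): `φ(w) = φ(sw) + 1` if `sw = w s*`, and
`φ(w) = φ(s w s*)` if `sw ≠ w s*`. -/
theorem statement0 {B W : Type} [Group W] [Finite B] {M : CoxeterMatrix B}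
    (cs : CoxeterSystem M W) (st : W ≃* W)
    (hst_inv : ∀ w, st (st w) = w)
    (hst_S : ∀ i : B, ∃ j : B, st (cs.simple i) = cs.simple j) :
    ∃! φ : {w : W // st w = w⁻¹} → ℕ,
      (∀ h1 : st (1 : W) = (1 : W)⁻¹, φ ⟨1, h1⟩ = 0) ∧
      (∀ w : {w : W // st w = w⁻¹}, ∀ i : B,
        cs.length (cs.simple i * w.1) < cs.length w.1 →
        ((cs.simple i * w.1 = w.1 * st (cs.simple i) →
            ∀ h : st (cs.simple i * w.1) = (cs.simple i * w.1)⁻¹,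
              φ w = φ ⟨cs.simple i * w.1, h⟩ + 1) ∧
         (cs.simple i * w.1 ≠ w.1 * st (cs.simple i) →
            ∀ h : st (cs.simple i * w.1 * st (cs.simple i)) =
                (cs.simple i * w.1 * st (cs.simple i))⁻¹,
              φ w = φ ⟨cs.simple i * w.1 * st (cs.simple i), h⟩))) :=
  statement0_general cs st hst_inv hst_S
end

section
/- There exists a unique collection of polynomials X^z_y ∈ ℤ[u], indexed by pairs (z,y) ∈ I_* × W, such that X^z_1 = δ_{z,1} for all z ∈ I_*, and for any s ∈ S, y ∈ W with y > ys, and z ∈ I_*: X^z_y = u X^z_{ys} + (u+1) X^{sz}_{ys} if sz = zs* > z; X^z_y = (u²−u−1) X^z_{ys} + (u²−u) X^{sz}_{ys} if sz = zs* < z; X^z_y = X^{szs*}_{ys} if sz ≠ zs* > z; X^z_y = (u²−1) X^z_{ys} + u² X^{szs*}_{ys} if sz ≠ zs* < z. Moreover X^z_y ∈ u^{l(z)} ℤ[u] for all (z,y). -/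
open Polynomial
open scoped Classical

/-- The characterization (Proposition 1.2) of the polynomials `X^z_y ∈ ℤ[u]`, indexed by pairs
`(z, y)` with `z` a twisted involution (`st z = z⁻¹`) and `y ∈ W`: `X^z_1 = δ_{z,1}`, and for
`s ∈ S`, `y > ys`, the recursions 1.2(i)–(iv) hold. -/
def XRec {B W : Type} [Group W] {M : CoxeterMatrix B} (cs : CoxeterSystem M W)
    (st : W ≃* W) (P : {z : W // st z = z⁻¹} → W → Polynomial ℤ) : Prop :=
  (∀ z : {z : W // st z = z⁻¹}, P z 1 = if z.1 = 1 then 1 else 0) ∧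
  ∀ (i : B) (y : W), cs.length (y * cs.simple i) < cs.length y →
    ∀ z : {z : W // st z = z⁻¹},
      (cs.simple i * z.1 = z.1 * st (cs.simple i) →
        cs.length z.1 < cs.length (cs.simple i * z.1) →
        ∀ h : st (cs.simple i * z.1) = (cs.simple i * z.1)⁻¹,
          P z y = X * P z (y * cs.simple i) +
            (X + 1) * P ⟨cs.simple i * z.1, h⟩ (y * cs.simple i)) ∧
      (cs.simple i * z.1 = z.1 * st (cs.simple i) →
        cs.length (cs.simple i * z.1) < cs.length z.1 →
        ∀ h : st (cs.simple i * z.1) = (cs.simple i * z.1)⁻¹,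
          P z y = (X ^ 2 - X - 1) * P z (y * cs.simple i) +
            (X ^ 2 - X) * P ⟨cs.simple i * z.1, h⟩ (y * cs.simple i)) ∧
      (cs.simple i * z.1 ≠ z.1 * st (cs.simple i) →
        cs.length z.1 < cs.length (cs.simple i * z.1) →
        ∀ h : st (cs.simple i * z.1 * st (cs.simple i)) =
            (cs.simple i * z.1 * st (cs.simple i))⁻¹,
          P z y = P ⟨cs.simple i * z.1 * st (cs.simple i), h⟩ (y * cs.simple i)) ∧
      (cs.simple i * z.1 ≠ z.1 * st (cs.simple i) →
        cs.length (cs.simple i * z.1) < cs.length z.1 →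
        ∀ h : st (cs.simple i * z.1 * st (cs.simple i)) =
            (cs.simple i * z.1 * st (cs.simple i))⁻¹,
          P z y = (X ^ 2 - 1) * P z (y * cs.simple i) +
            X ^ 2 * P ⟨cs.simple i * z.1 * st (cs.simple i), h⟩ (y * cs.simple i))

/-!
Transposing the recursion, `X^z_y` is the coefficient of the basis vector `1` in `T_y z`, where
`T_y` acts on the free `ℤ[u]`-module on the twisted involutions. By Matsumoto's theorem the
operators `T_y` exist as soon as the generators `T_s`, which satisfy the quadratic relation of the
Hecke algebra with parameter `u²`, satisfy the braid relations. The quadratic relation reduces these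
to a twisted involution `z` of minimal length in its orbit under a dihedral group `⟨s, t⟩`.
Generically both alternating products of length `m = ord (s t)` send `z` to the same basis vector.
The exceptions are the relations `r z = z r'*` with `r, r' ∈ {s, t}`. If only `s z = z s*` holds,
the orbits of `z` and `s z` are compared. Otherwise the difference of the alternating products of
length `k`, applied to `z`, obeys a two-term linear recurrence in `k`, and it vanishes at `m` as it
does at `0` because the orbit is symmetric about its middle.
-/

namespace LusztigVogan

open CoxeterSystem

section Exchange

variable {B W : Type*} [Group W] {M : CoxeterMatrix B} (cs : CoxeterSystem M W)

/-- The action of the simple reflection `s i` on `W × ℤ/2` underlying the exchange condition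
(Bourbaki, *Lie* IV.1.4): it conjugates the first coordinate and flips the sign exactly at
`s i` itself. -/
noncomputable def signedConj (i : B) : Function.End (W × ZMod 2) := fun p =>
  (cs.simple i * p.1 * cs.simple i, p.2 + if p.1 = cs.simple i then 1 else 0)

theorem prod_map_signedConj_apply (ω : List B) (t : W) (ε : ZMod 2) :
    (ω.map (signedConj cs)).prod (t, ε) =
      (cs.wordProd ω * t * (cs.wordProd ω)⁻¹, ε + (cs.rightInvSeq ω).count t) := by
  induction ω with
  | nil => simp [Function.End.one_def]
  | cons i ω ih =>
    have hconj : cs.wordProd ω * (t * (cs.wordProd ω)⁻¹) = cs.simple i ↔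
        (cs.wordProd ω)⁻¹ * (cs.simple i * cs.wordProd ω) = t := by
      constructor
      · intro h; rw [← h]; group
      · rintro rfl; group
    change signedConj cs i ((ω.map (signedConj cs)).prod (t, ε)) = _
    rw [ih]
    simp [signedConj, CoxeterSystem.rightInvSeq, List.count_cons, hconj, cs.wordProd_cons,
      mul_assoc, add_assoc]

theorem even_count_leftInvSeq_braid (i j : B) (t : W) :
    Even ((cs.leftInvSeq (alternatingWord i j (2 * M i j))).count t) := by
  have hperiod (k : ℕ) : cs.wordProd (alternatingWord j i (2 * (M i j + k) + 1)) =
      cs.wordProd (alternatingWord j i (2 * k + 1)) := by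
    have h : (2 * k + 1) / 2 = k ∧ (2 * (M i j + k) + 1) / 2 = M i j + k := by omega
    simp [cs.prod_alternatingWord_eq_mul_pow, h, pow_add, parity_simps]
  have hlist : cs.leftInvSeq (alternatingWord i j (2 * M i j)) =
      (List.range (2 * M i j)).map fun k => cs.wordProd (alternatingWord j i (2 * k + 1)) := by
    refine List.ext_getElem (by simp) fun k hk _ => ?_
    rw [cs.getElem_leftInvSeq_alternatingWord i j (M i j) k (by simpa using hk)]
    simp
  rw [hlist, two_mul, List.range_add, List.map_append, List.map_map, List.count_append]
  simp only [Function.comp_def, hperiod, Even]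
  exact ⟨_, rfl⟩

theorem reverse_alternatingWord_two_mul (i j : B) (k : ℕ) :
    (alternatingWord i j (2 * k)).reverse = alternatingWord j i (2 * k) := by
  induction k with
  | zero => rfl
  | succ k ih =>
    rw [show 2 * (k + 1) = 2 * k + 1 + 1 by ring, alternatingWord_succ, alternatingWord_succ,
      alternatingWord_succ', alternatingWord_succ', ← ih]
    simp [parity_simps]

theorem isLiftable_signedConj : M.IsLiftable (signedConj cs) := by
  intro i j
  have hword : (signedConj cs i * signedConj cs j) ^ M i j =
      ((alternatingWord i j (2 * M i j)).map (signedConj cs)).prod := by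
    induction M i j with
    | zero => rfl
    | succ k ih =>
      rw [show 2 * (k + 1) = 2 * k + 1 + 1 by ring, alternatingWord_succ, alternatingWord_succ,
        pow_succ, ih]
      simp
  have hcount (t : W) : Even ((cs.rightInvSeq (alternatingWord i j (2 * M i j))).count t) := by
    rw [← List.reverse_reverse (alternatingWord i j _), cs.rightInvSeq_reverse, List.count_reverse,
      reverse_alternatingWord_two_mul, M.symmetric i j]
    exact even_count_leftInvSeq_braid cs j i t
  have hone : cs.wordProd (alternatingWord i j (2 * M i j)) = 1 := by
    simp [cs.prod_alternatingWord_eq_mul_pow, cs.simple_mul_simple_pow]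
  funext p
  rw [hword, prod_map_signedConj_apply, (ZMod.natCast_eq_zero_iff_even).2 (hcount p.1), hone]
  simp [Function.End.one_def]

/-- The sign by which `w` acts at `t`; it is `1` precisely when `t` is a right inversion of `w`. -/
noncomputable def inversionSign (w t : W) : ZMod 2 :=
  (cs.lift ⟨signedConj cs, isLiftable_signedConj cs⟩ w (t, 0)).2

theorem lift_signedConj_apply (w t : W) (ε : ZMod 2) :
    cs.lift ⟨signedConj cs, isLiftable_signedConj cs⟩ w (t, ε) =
      (w * t * w⁻¹, ε + inversionSign cs w t) := by
  obtain ⟨ω, -, rfl⟩ := cs.exists_isReduced w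
  simp [inversionSign, CoxeterSystem.wordProd, map_list_prod, Function.comp_def,
    prod_map_signedConj_apply, cs.lift_apply_simple]

theorem inversionSign_wordProd (ω : List B) (t : W) :
    inversionSign cs (cs.wordProd ω) t = (cs.rightInvSeq ω).count t := by
  simp [inversionSign, CoxeterSystem.wordProd, map_list_prod, Function.comp_def,
    prod_map_signedConj_apply, cs.lift_apply_simple]

theorem inversionSign_mul (x y t : W) :
    inversionSign cs (x * y) t = inversionSign cs y t + inversionSign cs x (y * t * y⁻¹) := by
  rw [inversionSign, map_mul]
  change (cs.lift ⟨signedConj cs, isLiftable_signedConj cs⟩ x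
    (cs.lift ⟨signedConj cs, isLiftable_signedConj cs⟩ y (t, 0))).2 = _
  rw [lift_signedConj_apply, lift_signedConj_apply, zero_add]

theorem inversionSign_self {t : W} (ht : cs.IsReflection t) : inversionSign cs t t = 1 := by
  obtain ⟨x, i, rfl⟩ := ht
  have hsimple : inversionSign cs (cs.simple i) (cs.simple i) = 1 := by
    simpa using inversionSign_wordProd cs [i] (cs.simple i)
  have hcancel : inversionSign cs x⁻¹ (x * cs.simple i * x⁻¹) +
      inversionSign cs x (cs.simple i) = 0 := by
    have h := inversionSign_mul cs x x⁻¹ (x * cs.simple i * x⁻¹)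
    rw [show x⁻¹ * (x * cs.simple i * x⁻¹) * x⁻¹⁻¹ = cs.simple i by group, mul_inv_cancel] at h
    rw [← h]
    simpa using inversionSign_wordProd cs [] (x * cs.simple i * x⁻¹)
  rw [inversionSign_mul, show x⁻¹ * (x * cs.simple i * x⁻¹) * x⁻¹⁻¹ = cs.simple i by group,
    inversionSign_mul, hsimple]
  simp only [cs.simple_mul_simple_self, one_mul, cs.inv_simple]
  linear_combination hcancel

theorem isRightInversion_of_inversionSign_ne_zero {w t : W} (h : inversionSign cs w t ≠ 0) :
    cs.IsRightInversion w t := by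
  obtain ⟨ω, hω, rfl⟩ := cs.exists_isReduced w
  refine cs.isRightInversion_of_mem_rightInvSeq hω (List.count_pos_iff.1 (Nat.pos_of_ne_zero ?_))
  rw [inversionSign_wordProd] at h
  exact fun h0 => h (by rw [h0, Nat.cast_zero])

theorem isRightInversion_iff_inversionSign_ne_zero {w t : W} (ht : cs.IsReflection t) :
    cs.IsRightInversion w t ↔ inversionSign cs w t ≠ 0 := by
  refine ⟨fun h h0 => ?_, isRightInversion_of_inversionSign_ne_zero cs⟩
  have hwt : inversionSign cs (w * t) t ≠ 0 := by
    simp [inversionSign_mul, inversionSign_self cs ht, h0]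
  exact ht.isRightInversion_mul_left_iff.1 (isRightInversion_of_inversionSign_ne_zero cs hwt) h

theorem isRightInversion_or_of_isRightInversion_mul {x y t : W}
    (h : cs.IsRightInversion (x * y) t) :
    cs.IsRightInversion y t ∨ cs.IsRightInversion x (y * t * y⁻¹) := by
  by_contra! hxy
  rw [isRightInversion_iff_inversionSign_ne_zero cs h.1, inversionSign_mul,
    not_not.1 (mt (isRightInversion_of_inversionSign_ne_zero cs) hxy.1),
    not_not.1 (mt (isRightInversion_of_inversionSign_ne_zero cs) hxy.2)] at h
  exact h (add_zero 0)

theorem isLeftInversion_or_of_isLeftInversion_mul {x y t : W}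
    (h : cs.IsLeftInversion (x * y) t) :
    cs.IsLeftInversion x t ∨ cs.IsLeftInversion y (x⁻¹ * t * x) := by
  rw [← cs.isRightInversion_inv_iff, mul_inv_rev] at h
  simpa only [cs.isRightInversion_inv_iff, inv_inv] using
    isRightInversion_or_of_isRightInversion_mul cs h

theorem simple_mul_eq_mul_simple {x : W} {i j : B} (h : ¬ cs.IsLeftDescent x i)
    (h' : cs.IsLeftDescent (x * cs.simple j) i) : cs.simple i * x = x * cs.simple j := by
  simp only [← cs.isLeftInversion_simple_iff_isLeftDescent] at h h'
  have hlt := ((isLeftInversion_or_of_isLeftInversion_mul cs h').resolve_left h).2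
  rw [cs.length_simple, Nat.lt_one_iff, cs.length_eq_zero_iff, mul_assoc, mul_assoc,
    inv_mul_eq_one] at hlt
  simpa using congrArg (cs.simple i * ·) hlt

end Exchange

section AlternatingProd

variable {B A : Type*} [Monoid A]

/-- The alternating product `⋯ f i * f j * f i * f j` with `k` factors, the last one being `f j`;
the value at `alternatingWord i j k` of the monoid homomorphism extending `f`. -/
def alternatingProd (f : B → A) (i j : B) (k : ℕ) : A :=
  ((alternatingWord i j k).map f).prod

/-- The letter put in front of `alternatingWord i j k` to get `alternatingWord i j (k + 1)`. -/
def alternatingLetter (i j : B) (k : ℕ) : B :=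
  if Even k then j else i

theorem alternatingLetter_succ (i j : B) (k : ℕ) :
    alternatingLetter i j (k + 1) = alternatingLetter j i k := by
  unfold alternatingLetter
  split_ifs <;> grind

theorem alternatingLetter_eq_or (i j : B) (k : ℕ) :
    alternatingLetter i j k = i ∧ alternatingLetter j i k = j ∨
      alternatingLetter i j k = j ∧ alternatingLetter j i k = i := by
  unfold alternatingLetter
  split_ifs <;> simp

variable (f : B → A) (i j : B) (k : ℕ)

@[simp]
theorem alternatingProd_zero : alternatingProd f i j 0 = 1 := rfl

theorem alternatingProd_succ :
    alternatingProd f i j (k + 1) = alternatingProd f j i k * f j := by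
  simp [alternatingProd, alternatingWord_succ]

@[simp]
theorem alternatingProd_one : alternatingProd f i j 1 = f j := by
  rw [alternatingProd_succ, alternatingProd_zero, one_mul]

theorem alternatingProd_succ' :
    alternatingProd f i j (k + 1) = f (alternatingLetter i j k) * alternatingProd f i j k := by
  simp [alternatingProd, alternatingWord_succ', alternatingLetter]

end AlternatingProd

section Dihedral

variable {B W : Type*} [Group W] {M : CoxeterMatrix B} (cs : CoxeterSystem M W)

theorem orderOf_simple_mul_comm (i j : B) :
    orderOf (cs.simple j * cs.simple i) = orderOf (cs.simple i * cs.simple j) := by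
  rw [← orderOf_inv, mul_inv_rev, cs.inv_simple, cs.inv_simple]

theorem alternatingProd_inv_mul_alternatingProd (i j : B) (k : ℕ) :
    (alternatingProd cs.simple j i k)⁻¹ * alternatingProd cs.simple i j k =
      (cs.simple i * cs.simple j) ^ k := by
  induction k generalizing i j with
  | zero => simp
  | succ k ih =>
    calc (alternatingProd cs.simple j i (k + 1))⁻¹ * alternatingProd cs.simple i j (k + 1)
        = cs.simple i * ((alternatingProd cs.simple i j k)⁻¹ * alternatingProd cs.simple j i k) *
            cs.simple j := by
          simp [alternatingProd_succ, mul_assoc]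
      _ = (cs.simple i * cs.simple j) ^ (k + 1) := by
          rw [ih, ← mul_pow_mul, mul_assoc, ← pow_succ]

theorem alternatingProd_simple_swap_iff {i j : B} {k : ℕ} :
    alternatingProd cs.simple i j k = alternatingProd cs.simple j i k ↔
      orderOf (cs.simple i * cs.simple j) ∣ k := by
  rw [orderOf_dvd_iff_pow_eq_one, ← alternatingProd_inv_mul_alternatingProd, inv_mul_eq_one,
    eq_comm]

theorem alternatingProd_simple_mul_inv (i j : B) (a b : ℕ) :
    alternatingProd cs.simple j i a * (alternatingProd cs.simple i j b)⁻¹ =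
        alternatingProd cs.simple i j (a + b) ∨
      alternatingProd cs.simple j i a * (alternatingProd cs.simple i j b)⁻¹ =
        alternatingProd cs.simple j i (a + b) := by
  induction b generalizing i j a with
  | zero => simp
  | succ b ih =>
    have h : alternatingProd cs.simple j i a * (alternatingProd cs.simple i j (b + 1))⁻¹ =
        alternatingProd cs.simple i j (a + 1) * (alternatingProd cs.simple j i b)⁻¹ := by
      simp [alternatingProd_succ, mul_assoc]
    rw [h, ← add_assoc, add_right_comm]
    exact (ih j i (a + 1)).symm

theorem alternatingProd_simple_mul_cancel_left {i j : B} {k : ℕ}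
    (hk : orderOf (cs.simple i * cs.simple j) ∣ k) (w : W) :
    alternatingProd cs.simple i j k * (alternatingProd cs.simple i j k * w) = w := by
  have hswap := (alternatingProd_simple_swap_iff cs).2 hk
  have hinv : (alternatingProd cs.simple i j k)⁻¹ = alternatingProd cs.simple i j k := by
    simpa [hswap] using alternatingProd_simple_mul_inv cs i j 0 k
  rw [← eq_inv_mul_iff_mul_eq, hinv]

theorem alternatingProd_simple_mul_inv_of_add_eq {i j : B} {a b : ℕ}
    (h : a + b = orderOf (cs.simple i * cs.simple j)) :
    alternatingProd cs.simple j i a * (alternatingProd cs.simple i j b)⁻¹ =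
      alternatingProd cs.simple i j (orderOf (cs.simple i * cs.simple j)) := by
  rw [← h]
  rcases alternatingProd_simple_mul_inv cs i j a b with heq | heq <;> rw [heq]
  rw [(alternatingProd_simple_swap_iff cs).2 h.symm.dvd]

theorem length_alternatingProd_simple_le (i j : B) (k : ℕ) :
    cs.length (alternatingProd cs.simple i j k) ≤ k :=
  (cs.length_wordProd_le _).trans_eq (length_alternatingWord i j k)

theorem length_alternatingProd_simple_succ {i j : B} {k : ℕ}
    (hk : orderOf (cs.simple i * cs.simple j) = 0 ∨ k + 1 ≤ orderOf (cs.simple i * cs.simple j))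
    (hlength : cs.length (alternatingProd cs.simple j i k) = k)
    (hdescent : ∀ w, cs.IsLeftDescent w i → cs.IsLeftDescent w j →
      cs.length (alternatingProd cs.simple i j k * w) + k = cs.length w) :
    cs.length (alternatingProd cs.simple i j (k + 1)) = k + 1 := by
  rw [alternatingProd_succ]
  by_contra hne
  have hj : cs.IsRightDescent (alternatingProd cs.simple j i k) j := by
    by_contra h
    exact hne (by rw [cs.not_isRightDescent_iff.1 h, hlength])
  rcases k with - | k
  · simp [CoxeterSystem.IsRightDescent] at hj
  have hi : cs.IsRightDescent (alternatingProd cs.simple j i (k + 1)) i := by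
    have h := length_alternatingProd_simple_le cs i j k
    rw [CoxeterSystem.IsRightDescent, hlength, alternatingProd_succ,
      mul_assoc, cs.simple_mul_simple_self, mul_one]
    omega
  rw [← cs.isLeftDescent_inv_iff] at hi hj
  have hswap : alternatingProd cs.simple i j (k + 1) =
      alternatingProd cs.simple j i (k + 1) := by
    have h := hdescent _ hi hj
    rwa [cs.length_inv, hlength, Nat.add_eq_right, cs.length_eq_zero_iff, mul_inv_eq_one] at h
  have hdvd := (alternatingProd_simple_swap_iff cs).1 hswap
  have hle := Nat.le_of_dvd k.succ_pos hdvd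
  have hne : orderOf (cs.simple i * cs.simple j) ≠ 0 := fun h0 => by simp [h0] at hdvd
  omega

theorem length_alternatingProd_simple_succ_mul {i j : B} {k : ℕ} {w : W}
    (hlength : cs.length (alternatingProd cs.simple i j (k + 1)) = k + 1)
    (hw : cs.length (alternatingProd cs.simple j i k * w) + k = cs.length w)
    (hj : cs.IsLeftDescent w j) :
    cs.length (alternatingProd cs.simple i j (k + 1) * w) + (k + 1) = cs.length w := by
  have hlt : cs.length (alternatingProd cs.simple i j (k + 1) * w) <
      cs.length (alternatingProd cs.simple j i k * w) := by
    rw [← inv_mul_cancel_left (alternatingProd cs.simple j i k) w,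
      ← cs.isLeftInversion_simple_iff_isLeftDescent] at hj
    rcases isLeftInversion_or_of_isLeftInversion_mul cs hj with h | h
    · have hle := length_alternatingProd_simple_le cs j i k
      rw [cs.isLeftInversion_simple_iff_isLeftDescent, cs.isLeftDescent_inv_iff,
        CoxeterSystem.IsRightDescent, ← alternatingProd_succ] at h
      omega
    · simpa [alternatingProd_succ, mul_assoc] using h.2
  have hge : cs.length w ≤ cs.length (alternatingProd cs.simple i j (k + 1) * w) + (k + 1) := by
    have h := cs.length_mul_le (alternatingProd cs.simple i j (k + 1))⁻¹
      (alternatingProd cs.simple i j (k + 1) * w)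
    rwa [inv_mul_cancel_left, cs.length_inv, hlength, add_comm] at h
  omega

/-- The two halves are proved together: the first at `k + 1` needs the second at `k`, and the
second at `k + 1` needs the first at `k + 1`. -/
theorem length_alternatingProd_simple_and_descent {i j : B} {k : ℕ}
    (hk : orderOf (cs.simple i * cs.simple j) = 0 ∨ k ≤ orderOf (cs.simple i * cs.simple j)) :
    cs.length (alternatingProd cs.simple i j k) = k ∧
      ∀ w, cs.IsLeftDescent w i → cs.IsLeftDescent w j →
        cs.length (alternatingProd cs.simple i j k * w) + k = cs.length w := by
  induction k generalizing i j with
  | zero => simp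
  | succ k ih =>
    have hk' := hk.imp_right (k.le_succ.trans ·)
    have ih' := ih (i := j) (j := i) (by rwa [orderOf_simple_mul_comm])
    have hlength := length_alternatingProd_simple_succ cs hk ih'.1 (ih hk').2
    exact ⟨hlength, fun w hi hj =>
      length_alternatingProd_simple_succ_mul cs hlength (ih'.2 w hj hi) hj⟩

theorem orderOf_simple_mul_ne_zero {i j : B} {w : W} (hi : cs.IsLeftDescent w i)
    (hj : cs.IsLeftDescent w j) : orderOf (cs.simple i * cs.simple j) ≠ 0 := by
  intro h0
  have h := (length_alternatingProd_simple_and_descent cs (k := cs.length w + 1)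
    (Or.inl h0)).2 w hi hj
  omega

/-- `w` is the element of minimal length in its right coset of the dihedral subgroup generated by
`s i` and `s j`. -/
def IsDihedralMinimal (i j : B) (w : W) : Prop :=
  ¬ cs.IsLeftDescent w i ∧ ¬ cs.IsLeftDescent w j

variable {cs} in
theorem IsDihedralMinimal.symm {i j : B} {w : W} (h : IsDihedralMinimal cs i j w) :
    IsDihedralMinimal cs j i w :=
  And.symm h

theorem length_alternatingProd_simple_mul {i j : B} {k : ℕ} {w : W}
    (hk : orderOf (cs.simple i * cs.simple j) = 0 ∨ k ≤ orderOf (cs.simple i * cs.simple j))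
    (hw : IsDihedralMinimal cs i j w) :
    cs.length (alternatingProd cs.simple i j k * w) = k + cs.length w := by
  induction k with
  | zero => simp
  | succ k ih =>
    have hlength := ih (hk.imp_right (k.le_succ.trans ·))
    rw [alternatingProd_succ', mul_assoc]
    by_contra hne
    have hdescent : cs.IsLeftDescent (alternatingProd cs.simple i j k * w)
        (alternatingLetter i j k) := by
      by_contra h
      exact hne (by rw [cs.not_isLeftDescent_iff.1 h, hlength]; ring)
    rcases k with - | k
    · rw [alternatingProd_zero, one_mul] at hdescent
      rcases alternatingLetter_eq_or i j 0 with h | h <;> rw [h.1] at hdescent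
      exacts [hw.1 hdescent, hw.2 hdescent]
    have hdescent' : cs.IsLeftDescent (alternatingProd cs.simple i j (k + 1) * w)
        (alternatingLetter i j k) := by
      have h := cs.length_mul_le (alternatingProd cs.simple i j k) w
      have h' := length_alternatingProd_simple_le cs i j k
      rw [CoxeterSystem.IsLeftDescent, hlength, alternatingProd_succ', mul_assoc,
        cs.simple_mul_simple_cancel_left]
      omega
    rw [alternatingLetter_succ] at hdescent
    obtain ⟨hvi, hvj⟩ : cs.IsLeftDescent (alternatingProd cs.simple i j (k + 1) * w) i ∧
        cs.IsLeftDescent (alternatingProd cs.simple i j (k + 1) * w) j := by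
      rcases alternatingLetter_eq_or i j k with h | h <;> grind
    have hdrop : cs.length (cs.simple i * w) + (k + 1 + 1) =
        cs.length (alternatingProd cs.simple i j (k + 1) * w) := by
      have hinv : cs.simple i * w = alternatingProd cs.simple j i 1 *
          (alternatingProd cs.simple i j (k + 1))⁻¹ *
            (alternatingProd cs.simple i j (k + 1) * w) := by
        simp [mul_assoc]
      rw [hinv, add_comm (k + 1)]
      rw [add_comm (k + 1)] at hk
      rcases alternatingProd_simple_mul_inv cs i j 1 (k + 1) with h | h
      · exact h ▸ (length_alternatingProd_simple_and_descent cs hk).2 _ hvi hvj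
      · rw [← orderOf_simple_mul_comm] at hk
        exact h ▸ (length_alternatingProd_simple_and_descent cs hk).2 _ hvj hvi
    have := cs.not_isLeftDescent_iff.1 hw.1
    omega

theorem length_alternatingProd_simple_mul_inv_mul {i j : B} {a b : ℕ} {w : W}
    (h : a + b ≤ orderOf (cs.simple i * cs.simple j)) (hw : IsDihedralMinimal cs i j w) :
    cs.length (alternatingProd cs.simple j i a * (alternatingProd cs.simple i j b)⁻¹ * w) =
      a + b + cs.length w := by
  rcases alternatingProd_simple_mul_inv cs i j a b with heq | heq <;> rw [heq]
  · exact length_alternatingProd_simple_mul cs (Or.inr h) hw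
  · rw [← orderOf_simple_mul_comm] at h
    exact length_alternatingProd_simple_mul cs (Or.inr h) hw.symm

theorem alternatingProd_simple_mem_closure (i j : B) (k : ℕ) :
    alternatingProd cs.simple i j k ∈ Subgroup.closure {cs.simple i, cs.simple j} := by
  induction k generalizing i j with
  | zero => exact one_mem _
  | succ k ih =>
    rw [alternatingProd_succ]
    exact mul_mem (Set.pair_comm (cs.simple j) _ ▸ ih j i) (Subgroup.subset_closure (by simp))

theorem exists_alternatingProd_simple_mul_simple {i j : B} {k : ℕ} {p : W}
    (hm : orderOf (cs.simple i * cs.simple j) ≠ 0)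
    (hk : k ≤ orderOf (cs.simple i * cs.simple j))
    (hp : p = alternatingProd cs.simple i j k ∨ p = alternatingProd cs.simple j i k) :
    ∃ k' ≤ orderOf (cs.simple i * cs.simple j), p * cs.simple j = alternatingProd cs.simple i j k' ∨
      p * cs.simple j = alternatingProd cs.simple j i k' := by
  have hcancel (k' : ℕ) : alternatingProd cs.simple i j (k' + 1) * cs.simple j =
      alternatingProd cs.simple j i k' := by
    rw [alternatingProd_succ, mul_assoc, cs.simple_mul_simple_self, mul_one]
  rcases hp with rfl | rfl
  · rcases k with - | k
    · exact ⟨1, Nat.one_le_iff_ne_zero.2 hm, Or.inl (by simp)⟩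
    · exact ⟨k, by omega, Or.inr (hcancel k)⟩
  · rcases hk.lt_or_eq with hlt | heq
    · exact ⟨k + 1, hlt, Or.inl (alternatingProd_succ ..).symm⟩
    · obtain ⟨k, rfl⟩ := Nat.exists_eq_add_one_of_ne_zero (heq ▸ hm)
      rw [← (alternatingProd_simple_swap_iff cs).2 heq.symm.dvd]
      exact ⟨k, by omega, Or.inr (hcancel k)⟩

theorem exists_eq_alternatingProd_simple_of_mem_closure {i j : B} {p : W}
    (hm : orderOf (cs.simple i * cs.simple j) ≠ 0)
    (hp : p ∈ Subgroup.closure {cs.simple i, cs.simple j}) :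
    ∃ k ≤ orderOf (cs.simple i * cs.simple j),
      p = alternatingProd cs.simple i j k ∨ p = alternatingProd cs.simple j i k := by
  have mul_right (x y : W) (hy : y ∈ ({cs.simple i, cs.simple j} : Set W))
      (hx : ∃ k ≤ orderOf (cs.simple i * cs.simple j),
        x = alternatingProd cs.simple i j k ∨ x = alternatingProd cs.simple j i k) :
      ∃ k ≤ orderOf (cs.simple i * cs.simple j),
        x * y = alternatingProd cs.simple i j k ∨ x * y = alternatingProd cs.simple j i k := by
    obtain ⟨k, hk, hx⟩ := hx
    rcases hy with rfl | rfl
    · rw [← orderOf_simple_mul_comm] at hm hk ⊢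
      simpa only [or_comm] using exists_alternatingProd_simple_mul_simple cs hm hk hx.symm
    · exact exists_alternatingProd_simple_mul_simple cs hm hk hx
  induction hp using Subgroup.closure_induction_right with
  | one => exact ⟨0, Nat.zero_le _, Or.inl rfl⟩
  | mul_right x _ y hy hx => exact mul_right x y hy hx
  | mul_inv_cancel x _ y hy hx =>
    have hinv : y⁻¹ = y := by rcases hy with rfl | rfl <;> exact cs.inv_simple _
    rw [hinv]
    exact mul_right x y hy hx

theorem eq_simple_of_length_mul_eq_add_one {i j : B} {p w : W}
    (hm : orderOf (cs.simple i * cs.simple j) ≠ 0) (hw : IsDihedralMinimal cs i j w)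
    (hp : p ∈ Subgroup.closure {cs.simple i, cs.simple j})
    (h : cs.length (p * w) = cs.length w + 1) : p = cs.simple i ∨ p = cs.simple j := by
  obtain ⟨k, hk, rfl | rfl⟩ := exists_eq_alternatingProd_simple_of_mem_closure cs hm hp
  · rw [length_alternatingProd_simple_mul cs (Or.inr hk) hw, add_comm, Nat.add_left_cancel_iff] at h
    exact Or.inr (by rw [h, alternatingProd_one])
  · rw [← orderOf_simple_mul_comm] at hk
    rw [length_alternatingProd_simple_mul cs (Or.inr hk) hw.symm, add_comm,
      Nat.add_left_cancel_iff] at h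
    exact Or.inl (by rw [h, alternatingProd_one])

end Dihedral

section Matsumoto

variable {B W A : Type*} [Group W] [Monoid A] {M : CoxeterMatrix B} (cs : CoxeterSystem M W)

/-- `T` satisfies the braid relations of the Coxeter system. They are indexed by the orders of the
products `s i * s j`, which makes them independent of the identity of these orders with the entries
of the Coxeter matrix. -/
def SatisfiesBraidRelations (T : B → A) : Prop :=
  ∀ i j, orderOf (cs.simple i * cs.simple j) ≠ 0 →
    alternatingProd T i j (orderOf (cs.simple i * cs.simple j)) =
      alternatingProd T j i (orderOf (cs.simple i * cs.simple j))

variable {cs}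

theorem exists_isReduced_cons_cons {T : B → A} (hT : SatisfiesBraidRelations cs T) {i j : B} {w : W}
    (hi : cs.IsLeftDescent w i) (hj : cs.IsLeftDescent w j) :
    ∃ α β, (cs.IsReduced (i :: α) ∧ cs.wordProd (i :: α) = w) ∧
      (cs.IsReduced (j :: β) ∧ cs.wordProd (j :: β) = w) ∧
      ((i :: α).map T).prod = ((j :: β).map T).prod := by
  obtain ⟨k, hk⟩ := Nat.exists_eq_add_one_of_ne_zero (orderOf_simple_mul_ne_zero cs hi hj)
  have hbraid := hT i j (hk ▸ k.succ_ne_zero)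
  rw [hk] at hbraid
  have hlength := (length_alternatingProd_simple_and_descent cs (Or.inr hk.ge)).2 w hi hj
  obtain ⟨γ, hγ, hw⟩ := cs.exists_isReduced (alternatingProd cs.simple i j (k + 1) * w)
  have hij : cs.wordProd (alternatingWord i j (k + 1) ++ γ) = w := by
    rw [cs.wordProd_append, ← hw]
    exact alternatingProd_simple_mul_cancel_left cs hk.dvd w
  have hji : cs.wordProd (alternatingWord j i (k + 1) ++ γ) = w := by
    rw [← hij, cs.wordProd_append, cs.wordProd_append]
    exact congrArg (· * _) ((alternatingProd_simple_swap_iff cs).2 hk.dvd).symm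
  have hlen : cs.length w = k + 1 + γ.length := by
    rw [← hγ.eq, ← hw, add_comm, hlength]
  have hprod : ((alternatingWord i j (k + 1) ++ γ).map T).prod =
      ((alternatingWord j i (k + 1) ++ γ).map T).prod := by
    rw [List.map_append, List.map_append, List.prod_append, List.prod_append]
    exact congrArg (· * _) hbraid
  simp only [alternatingWord_succ', List.cons_append] at hij hji hprod
  rcases alternatingLetter_eq_or i j k with h | h <;> simp only [alternatingLetter] at h
  · simp only [h] at hij hji hprod
    exact ⟨_, _, ⟨by simp [CoxeterSystem.IsReduced, hij, hlen, add_right_comm], hij⟩,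
      ⟨by simp [CoxeterSystem.IsReduced, hji, hlen, add_right_comm], hji⟩, hprod⟩
  · simp only [h] at hij hji hprod
    exact ⟨_, _, ⟨by simp [CoxeterSystem.IsReduced, hji, hlen, add_right_comm], hji⟩,
      ⟨by simp [CoxeterSystem.IsReduced, hij, hlen, add_right_comm], hij⟩, hprod.symm⟩

theorem isLeftDescent_of_isReduced_cons {i : B} {α : List B} (h : cs.IsReduced (i :: α)) :
    cs.IsLeftDescent (cs.wordProd (i :: α)) i := by
  rw [CoxeterSystem.IsLeftDescent, h.eq, cs.wordProd_cons, cs.simple_mul_simple_cancel_left]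
  exact (cs.length_wordProd_le α).trans_lt (Nat.lt_succ_self _)

theorem prod_map_eq_of_wordProd_eq {T : B → A} (hT : SatisfiesBraidRelations cs T)
    {ω ω' : List B} (hω : cs.IsReduced ω) (hω' : cs.IsReduced ω')
    (h : cs.wordProd ω = cs.wordProd ω') : (ω.map T).prod = (ω'.map T).prod := by
  induction hn : ω.length generalizing ω ω' with
  | zero =>
    have h0 : ω'.length = 0 := by rw [← hω'.eq, ← h, hω.eq, hn]
    rw [List.length_eq_zero_iff.1 hn, List.length_eq_zero_iff.1 h0]
  | succ n ih =>
    have same_head {p : B} {α α' : List B} (hα : cs.IsReduced (p :: α))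
        (hα' : cs.IsReduced (p :: α')) (hw : cs.wordProd (p :: α) = cs.wordProd ω)
        (hw' : cs.wordProd (p :: α') = cs.wordProd ω) :
        ((p :: α).map T).prod = ((p :: α').map T).prod := by
      rw [List.map_cons, List.map_cons, List.prod_cons, List.prod_cons,
        ih (ω := α) (ω' := α') (hα.drop 1) (hα'.drop 1)]
      · simpa [cs.wordProd_cons] using hw.trans hw'.symm
      · have := hα.eq
        rw [hw, hω.eq, hn, List.length_cons] at this
        simpa using this.symm
    have hn' : ω'.length = n + 1 := by rw [← hω'.eq, ← h, hω.eq, hn]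
    obtain ⟨i, α, rfl⟩ := List.exists_cons_of_length_eq_add_one hn
    obtain ⟨j, β, rfl⟩ := List.exists_cons_of_length_eq_add_one hn'
    obtain ⟨α', β', hα', hβ', hprod⟩ := exists_isReduced_cons_cons hT
      (isLeftDescent_of_isReduced_cons hω) (h ▸ isLeftDescent_of_isReduced_cons hω')
    rw [same_head hω hα'.1 rfl hα'.2, hprod, same_head hβ'.1 hω' hβ'.2 h.symm]

theorem exists_map_mul_simple_of_satisfiesBraidRelations {T : B → A}
    (hT : SatisfiesBraidRelations cs T) :
    ∃ f : W → A, f 1 = 1 ∧ ∀ i y, cs.IsRightDescent y i → f y = f (y * cs.simple i) * T i := by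
  choose word hred hword using cs.exists_isReduced
  have hf {ω : List B} (hω : cs.IsReduced ω) :
      ((word (cs.wordProd ω)).map T).prod = (ω.map T).prod :=
    prod_map_eq_of_wordProd_eq hT (hred _) hω (hword _).symm
  refine ⟨fun w => ((word w).map T).prod, ?_, fun i y hi => ?_⟩
  · simpa using hf (ω := []) (by simp [CoxeterSystem.IsReduced])
  · have hy : cs.wordProd (word (y * cs.simple i) ++ [i]) = y := by
      simp [cs.wordProd_append, ← hword]
    have hlen : cs.IsReduced (word (y * cs.simple i) ++ [i]) := by
      rw [CoxeterSystem.IsReduced, hy, List.length_append, ← (hred _).eq, ← hword,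
        List.length_singleton, ← cs.isRightDescent_iff.1 hi]
    simpa [hy] using hf hlen

end Matsumoto

section QuadraticRelation

variable {R A B : Type*} [CommRing R] [Ring A] [Algebra R A] {q : R} {f : B → A}

theorem add_mul_alternatingProd (hf : ∀ i, f i * f i = (q - 1) • f i + q • 1) (i j : B) (k : ℕ) :
    (f i + f j) * alternatingProd f i j (k + 1) =
      alternatingProd f i j (k + 2) + (q - 1) • alternatingProd f i j (k + 1) +
        q • alternatingProd f i j k := by
  have hadd : f i + f j = f (alternatingLetter j i k) + f (alternatingLetter i j k) := by
    rcases alternatingLetter_eq_or i j k with h | h <;> rw [h.1, h.2]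
    exact add_comm _ _
  rw [hadd, add_mul, ← alternatingLetter_succ, ← alternatingProd_succ',
    alternatingProd_succ' f i j k, ← mul_assoc, hf, add_mul, smul_mul_assoc, smul_mul_assoc,
    one_mul, ← add_assoc]

theorem alternatingProd_sub_alternatingProd_succ_succ
    (hf : ∀ i, f i * f i = (q - 1) • f i + q • 1) (i j : B) (k : ℕ) :
    alternatingProd f i j (k + 2) - alternatingProd f j i (k + 2) =
      (f i + f j - (q - 1) • 1) * (alternatingProd f i j (k + 1) - alternatingProd f j i (k + 1)) -
        q • (alternatingProd f i j k - alternatingProd f j i k) := by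
  have hij := add_mul_alternatingProd hf i j k
  have hji := add_mul_alternatingProd hf j i k
  rw [add_comm (f j)] at hji
  rw [sub_mul, mul_sub, hij, hji, smul_mul_assoc, one_mul]
  module

end QuadraticRelation

section LinearRecurrence

variable {R V B : Type*} [CommRing R] [AddCommGroup V] [Module R V]

/-- The hypotheses `ha` and `ha'` propagate along the recurrence: `x` is, up to powers of `q`,
symmetric about `(a + b + 1) / 2`, so its zero at `0` is reflected to `a + b + 1`. -/
theorem eq_zero_of_recurrence_of_reflection {q c : R} {C : Module.End R V} {x : ℕ → V}
    (hx : ∀ k, x (k + 2) = C (x (k + 1)) - q • x k) (h0 : x 0 = 0) {a b : ℕ}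
    (ha : x a = c • x (b + 1)) (ha' : x (a + 1) = (c * q) • x b) : x (a + b + 1) = 0 := by
  induction b generalizing a c with
  | zero => rw [add_zero, ha', h0, smul_zero]
  | succ b ih =>
    rw [show a + (b + 1) + 1 = a + 1 + b + 1 by ring]
    refine ih ha' ?_
    rw [hx, ha, ha', hx, map_smul]
    module

theorem eq_zero_of_recurrence_of_eq_smul {q c : R} {C : Module.End R V} {x : ℕ → V}
    (hx : ∀ k, x (k + 2) = C (x (k + 1)) - q • x k) (h0 : x 0 = 0) (hc : c ^ 2 = q) {h : ℕ}
    (hh : x (h + 1) = c • x h) : x (2 * h + 1) = 0 := by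
  rcases h with - | h
  · simpa [h0] using hh
  rw [show 2 * (h + 1) + 1 = h + 1 + 1 + h + 1 by ring]
  refine eq_zero_of_recurrence_of_reflection hx h0 hh ?_
  have hC : C (x (h + 1)) = c • x (h + 1) + q • x h := by rw [← hh, hx, sub_add_cancel]
  rw [hx (h + 1), hh, map_smul, hC, ← hc]
  module

theorem eq_zero_of_recurrence_of_eq_zero {q : R} {C : Module.End R V} {x : ℕ → V}
    (hx : ∀ k, x (k + 2) = C (x (k + 1)) - q • x k) (h0 : x 0 = 0) {h : ℕ}
    (hh : x h = 0) : x (2 * h) = 0 := by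
  rcases h with - | h
  · exact h0
  rw [show 2 * (h + 1) = h + 1 + h + 1 by ring]
  refine eq_zero_of_recurrence_of_reflection (c := -1) hx h0 (by simp [hh]) ?_
  rw [hx, hh, map_zero]
  module

variable {q : R} {T : B → Module.End R V}

theorem alternatingProd_apply_sub_succ_succ (hT : ∀ i, T i * T i = (q - 1) • T i + q • 1) (i j : B)
    (v : V) (k : ℕ) :
    alternatingProd T i j (k + 2) v - alternatingProd T j i (k + 2) v =
      (T i + T j - (q - 1) • 1 : Module.End R V)
        (alternatingProd T i j (k + 1) v - alternatingProd T j i (k + 1) v) -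
        q • (alternatingProd T i j k v - alternatingProd T j i k v) :=
  LinearMap.congr_fun (alternatingProd_sub_alternatingProd_succ_succ hT i j k) v

theorem alternatingProd_two_mul_apply_eq (hT : ∀ i, T i * T i = (q - 1) • T i + q • 1) {i j : B}
    {v : V} {h : ℕ} (hh : alternatingProd T i j h v = alternatingProd T j i h v) :
    alternatingProd T i j (2 * h) v = alternatingProd T j i (2 * h) v :=
  sub_eq_zero.1 <| eq_zero_of_recurrence_of_eq_zero
    (x := fun k => alternatingProd T i j k v - alternatingProd T j i k v)
    (alternatingProd_apply_sub_succ_succ hT i j v) (sub_self _) (sub_eq_zero.2 hh)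

theorem alternatingProd_two_mul_add_one_apply_eq {c : R}
    (hT : ∀ i, T i * T i = (q - 1) • T i + q • 1) (hc : c ^ 2 = q) {i j : B} {v : V} {h : ℕ}
    (hh : alternatingProd T i j (h + 1) v - alternatingProd T j i (h + 1) v =
      c • (alternatingProd T i j h v - alternatingProd T j i h v)) :
    alternatingProd T i j (2 * h + 1) v = alternatingProd T j i (2 * h + 1) v :=
  sub_eq_zero.1 <| eq_zero_of_recurrence_of_eq_smul
    (x := fun k => alternatingProd T i j k v - alternatingProd T j i k v)
    (alternatingProd_apply_sub_succ_succ hT i j v) (sub_self _) hc hh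

theorem alternatingProd_two_mul_add_two_apply_eq (hT : ∀ i, T i * T i = (q - 1) • T i + q • 1)
    {i j : B} {v : V} {h : ℕ}
    (hh : alternatingProd T i j (h + 2) v - alternatingProd T j i (h + 2) v =
      q • (alternatingProd T i j h v - alternatingProd T j i h v)) :
    alternatingProd T i j (2 * h + 2) v = alternatingProd T j i (2 * h + 2) v := by
  rw [show 2 * h + 2 = h + 1 + h + 1 by ring]
  exact sub_eq_zero.1 <| eq_zero_of_recurrence_of_reflection (c := 1)
    (x := fun k => alternatingProd T i j k v - alternatingProd T j i k v)
    (alternatingProd_apply_sub_succ_succ hT i j v) (sub_self _) (one_smul _ _).symm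
    (by rwa [one_mul])

theorem alternatingProd_apply_apply_eq (hT : ∀ i, T i * T i = (q - 1) • T i + q • 1) {i j : B}
    {k : ℕ} {v : V} (h : alternatingProd T i j (k + 1) v = alternatingProd T j i (k + 1) v) :
    alternatingProd T i j (k + 1) (T j v) = alternatingProd T j i (k + 1) (T j v) := by
  have hleft : alternatingProd T i j (k + 1) * T j =
      (q - 1) • alternatingProd T i j (k + 1) + q • alternatingProd T j i k := by
    rw [alternatingProd_succ, mul_assoc, hT, mul_add, mul_smul_comm, mul_smul_comm, mul_one]
  have hright : T (alternatingLetter j i k) * alternatingProd T j i (k + 1) =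
      (q - 1) • alternatingProd T j i (k + 1) + q • alternatingProd T j i k := by
    rw [alternatingProd_succ', ← mul_assoc, hT, add_mul, smul_mul_assoc, smul_mul_assoc, one_mul]
  calc alternatingProd T i j (k + 1) (T j v)
      = (T (alternatingLetter j i k) * alternatingProd T j i (k + 1)) v := by
        rw [hright, ← Module.End.mul_apply, hleft]
        simp [h]
    _ = alternatingProd T i j (k + 1 + 1) v := by
        rw [Module.End.mul_apply, ← h, alternatingProd_succ' T i j (k + 1), alternatingLetter_succ,
          Module.End.mul_apply]
    _ = alternatingProd T j i (k + 1) (T j v) := by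
        rw [alternatingProd_succ, Module.End.mul_apply]

end LinearRecurrence

section TwistedInvolutions

variable {B W : Type*} [Group W] {M : CoxeterMatrix B}

/-- `st` is an automorphism of the Coxeter system of order at most two. -/
structure IsDiagramInvolution (cs : CoxeterSystem M W) (st : W ≃* W) : Prop where
  apply_apply : ∀ w, st (st w) = w
  exists_simple : ∀ i, ∃ j, st (cs.simple i) = cs.simple j

/-- The set `I_*` of twisted involutions. -/
abbrev TwistedInvolution (st : W ≃* W) : Type _ :=
  {z : W // st z = z⁻¹}

variable {cs : CoxeterSystem M W} {st : W ≃* W}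

/-- The simple reflection `s i` commutes with `z` in the twisted sense: `s z = z s*`. -/
def TwistedCommutes (cs : CoxeterSystem M W) (i : B) (z : TwistedInvolution st) : Prop :=
  cs.simple i * z.1 = z.1 * st (cs.simple i)

theorem twistedCommutes_of_coe_eq {i : B} {y z : TwistedInvolution st}
    (h : y.1 = cs.simple i * z.1) : TwistedCommutes cs i z := by
  have hy := y.2
  rw [h, map_mul, z.2, mul_inv_rev, cs.inv_simple, mul_inv_eq_iff_eq_mul] at hy
  rw [TwistedCommutes, hy]
  simp only [mul_assoc, mul_inv_cancel_left]

theorem apply_mul_eq_inv {w : W} {z : TwistedInvolution st} (h : w * z.1 * st w = z.1) :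
    st (w * z.1) = (w * z.1)⁻¹ := by
  rw [map_mul, z.2, eq_inv_mul_of_mul_eq h, mul_inv_cancel_right]

namespace IsDiagramInvolution

variable (hst : IsDiagramInvolution cs st)
include hst

theorem length_apply (w : W) : cs.length (st w) = cs.length w := by
  have hle (w : W) : cs.length (st w) ≤ cs.length w := by
    obtain ⟨ω, hω, rfl⟩ := cs.exists_isReduced w
    choose σ hσ using hst.exists_simple
    have h : st (cs.wordProd ω) = cs.wordProd (ω.map σ) := by
      simp [CoxeterSystem.wordProd, map_list_prod, Function.comp_def, hσ]
    rw [h, hω.eq, ← List.length_map σ]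
    exact cs.length_wordProd_le _
  exact (hle w).antisymm (by simpa [hst.apply_apply] using hle (st w))

/-- The twisted conjugate `w z (w*)⁻¹`. -/
def twistedConj (w : W) (z : TwistedInvolution st) : TwistedInvolution st :=
  ⟨w * z.1 * (st w)⁻¹, by simp [z.2, hst.apply_apply, mul_assoc]⟩

theorem coe_twistedConj (w : W) (z : TwistedInvolution st) :
    (hst.twistedConj w z).1 = w * z.1 * (st w)⁻¹ := rfl

theorem twistedConj_mul (x y : W) (z : TwistedInvolution st) :
    hst.twistedConj (x * y) z = hst.twistedConj x (hst.twistedConj y z) :=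
  Subtype.ext (by simp [twistedConj, mul_assoc])

theorem coe_twistedConj_simple (i : B) (z : TwistedInvolution st) :
    (hst.twistedConj (cs.simple i) z).1 = cs.simple i * z.1 * st (cs.simple i) := by
  simp [twistedConj, ← map_inv]

theorem twistedConj_simple_twistedConj_simple (i : B) (z : TwistedInvolution st) :
    hst.twistedConj (cs.simple i) (hst.twistedConj (cs.simple i) z) = z := by
  rw [← hst.twistedConj_mul, cs.simple_mul_simple_self]
  ext
  simp [twistedConj]

theorem twistedConj_simple_eq_self_iff {i : B} {z : TwistedInvolution st} :
    hst.twistedConj (cs.simple i) z = z ↔ TwistedCommutes cs i z := by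
  rw [Subtype.ext_iff, twistedConj, mul_inv_eq_iff_eq_mul, TwistedCommutes]

theorem length_twistedConj_le (w : W) (z : TwistedInvolution st) :
    cs.length (hst.twistedConj w z).1 ≤ cs.length z.1 + 2 * cs.length w := by
  have h := cs.length_mul_le (w * z.1) (st w)⁻¹
  have h' := cs.length_mul_le w z.1
  rw [cs.length_inv, hst.length_apply] at h
  simp only [twistedConj]
  omega

/-- The neighbour of `z` along `s i`: `s z` if `s z = z s*`, and `s z s*` otherwise. -/
noncomputable def step (i : B) (z : TwistedInvolution st) : TwistedInvolution st :=
  if h : TwistedCommutes cs i z then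
    ⟨cs.simple i * z.1, by
      rw [mul_inv_rev, cs.inv_simple, map_mul, z.2, mul_inv_eq_iff_eq_mul, mul_assoc, h,
        inv_mul_cancel_left]⟩
  else hst.twistedConj (cs.simple i) z

theorem coe_step_of_twistedCommutes {i : B} {z : TwistedInvolution st}
    (h : TwistedCommutes cs i z) : (hst.step i z).1 = cs.simple i * z.1 := by
  rw [step, dif_pos h]

theorem step_of_not_twistedCommutes {i : B} {z : TwistedInvolution st}
    (h : ¬ TwistedCommutes cs i z) : hst.step i z = hst.twistedConj (cs.simple i) z := by
  rw [step, dif_neg h]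

theorem twistedCommutes_step_iff {i : B} {z : TwistedInvolution st} :
    TwistedCommutes cs i (hst.step i z) ↔ TwistedCommutes cs i z := by
  by_cases h : TwistedCommutes cs i z
  · refine iff_of_true ?_ h
    rw [TwistedCommutes, hst.coe_step_of_twistedCommutes h, mul_assoc, ← h]
  · refine iff_of_false ?_ h
    rwa [hst.step_of_not_twistedCommutes h, ← hst.twistedConj_simple_eq_self_iff,
      hst.twistedConj_simple_twistedConj_simple, eq_comm, hst.twistedConj_simple_eq_self_iff]

theorem step_step (i : B) (z : TwistedInvolution st) : hst.step i (hst.step i z) = z := by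
  by_cases h : TwistedCommutes cs i z
  · ext
    rw [hst.coe_step_of_twistedCommutes (hst.twistedCommutes_step_iff.2 h),
      hst.coe_step_of_twistedCommutes h, cs.simple_mul_simple_cancel_left]
  · rw [hst.step_of_not_twistedCommutes (mt hst.twistedCommutes_step_iff.1 h),
      hst.step_of_not_twistedCommutes h, hst.twistedConj_simple_twistedConj_simple]

theorem length_mul_inv_apply (w : W) (z : TwistedInvolution st) :
    cs.length (z.1 * (st w)⁻¹) = cs.length (w * z.1) := by
  rw [← cs.length_inv, mul_inv_rev, inv_inv, ← z.2, ← map_mul, hst.length_apply]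

theorem length_mul_apply_simple (i : B) (z : TwistedInvolution st) :
    cs.length (z.1 * st (cs.simple i)) = cs.length (cs.simple i * z.1) := by
  rw [← hst.length_mul_inv_apply, ← map_inv, cs.inv_simple]

theorem length_step_of_not_isLeftDescent {i : B} {z : TwistedInvolution st}
    (hc : ¬ TwistedCommutes cs i z) (h : ¬ cs.IsLeftDescent z.1 i) :
    cs.length (hst.step i z).1 = cs.length z.1 + 2 := by
  obtain ⟨j, hj⟩ := hst.exists_simple i
  have hlength := hst.length_mul_apply_simple i z
  rw [cs.not_isLeftDescent_iff.1 h] at hlength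
  have h' : ¬ cs.IsLeftDescent (z.1 * st (cs.simple i)) i := fun h' =>
    hc ((simple_mul_eq_mul_simple cs h (hj ▸ h')).trans (by rw [hj]))
  rw [hst.step_of_not_twistedCommutes hc, hst.coe_twistedConj_simple, mul_assoc,
    cs.not_isLeftDescent_iff.1 h', hlength]

theorem isLeftDescent_step_of_not_isLeftDescent {i : B} {z : TwistedInvolution st}
    (h : ¬ cs.IsLeftDescent z.1 i) : cs.IsLeftDescent (hst.step i z).1 i := by
  by_cases hc : TwistedCommutes cs i z
  · rw [hst.coe_step_of_twistedCommutes hc, CoxeterSystem.IsLeftDescent,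
      cs.simple_mul_simple_cancel_left, cs.not_isLeftDescent_iff.1 h]
    exact Nat.lt_succ_self _
  · rw [CoxeterSystem.IsLeftDescent, hst.length_step_of_not_isLeftDescent hc h,
      hst.step_of_not_twistedCommutes hc, hst.coe_twistedConj_simple, mul_assoc,
      cs.simple_mul_simple_cancel_left, hst.length_mul_apply_simple, cs.not_isLeftDescent_iff.1 h]
    exact Nat.lt_succ_self _

theorem isLeftDescent_step_iff {i : B} {z : TwistedInvolution st} :
    cs.IsLeftDescent (hst.step i z).1 i ↔ ¬ cs.IsLeftDescent z.1 i := by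
  refine ⟨fun h hz => ?_, hst.isLeftDescent_step_of_not_isLeftDescent⟩
  have hasc : ¬ cs.IsLeftDescent (cs.simple i * z.1) i := by
    rw [CoxeterSystem.IsLeftDescent, cs.simple_mul_simple_cancel_left]
    exact hz.not_gt
  by_cases hc : TwistedCommutes cs i z
  · exact hasc (hst.coe_step_of_twistedCommutes hc ▸ h)
  · obtain ⟨j, hj⟩ := hst.exists_simple i
    rw [hst.step_of_not_twistedCommutes hc, hst.coe_twistedConj_simple, hj] at h
    have h' := simple_mul_eq_mul_simple cs hasc h
    rw [cs.simple_mul_simple_cancel_left, ← hj, ← hst.coe_twistedConj_simple] at h'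
    exact hc (hst.twistedConj_simple_eq_self_iff.1 (Subtype.ext h'.symm))

end IsDiagramInvolution

end TwistedInvolutions

section HeckeOperators

variable {B W : Type*} [Group W] {M : CoxeterMatrix B} {cs : CoxeterSystem M W} {st : W ≃* W}

/-- The coefficient of `a_z` in `T i a_z`. -/
noncomputable def diagCoeff (cs : CoxeterSystem M W) (i : B) (z : TwistedInvolution st) : ℤ[X] :=
  if TwistedCommutes cs i z then if cs.IsLeftDescent z.1 i then X ^ 2 - X - 1 else X
  else if cs.IsLeftDescent z.1 i then X ^ 2 - 1 else 0

/-- The coefficient of `a_z'` in `T i a_z`, where `z'` is the neighbour of `z` along `s i`. -/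
noncomputable def offDiagCoeff (cs : CoxeterSystem M W) (i : B) (z : TwistedInvolution st) : ℤ[X] :=
  if TwistedCommutes cs i z then if cs.IsLeftDescent z.1 i then X ^ 2 - X else X + 1
  else if cs.IsLeftDescent z.1 i then X ^ 2 else 1

/-- The basis element `a_z` of the free `ℤ[u]`-module on the twisted involutions. -/
noncomputable abbrev basisElt (z : TwistedInvolution st) : TwistedInvolution st →₀ ℤ[X] :=
  Finsupp.single z 1

namespace IsDiagramInvolution

variable (hst : IsDiagramInvolution cs st)

/-- The operator by which the generator `T i` of the Hecke algebra with parameter `u²` acts on the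
free module on the twisted involutions. The recursion for the polynomials `X^z_y` is the transpose
of right multiplication by this operator. -/
noncomputable def heckeOp (i : B) : Module.End ℤ[X] (TwistedInvolution st →₀ ℤ[X]) :=
  Finsupp.linearCombination ℤ[X] fun z =>
    diagCoeff cs i z • basisElt z + offDiagCoeff cs i z • basisElt (hst.step i z)

theorem heckeOp_basisElt (i : B) (z : TwistedInvolution st) :
    hst.heckeOp i (basisElt z) =
      diagCoeff cs i z • basisElt z + offDiagCoeff cs i z • basisElt (hst.step i z) := by
  rw [heckeOp, Finsupp.linearCombination_single, one_smul]

theorem heckeOp_basisElt_of_coe_eq {i : B} {y z : TwistedInvolution st}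
    (h : y.1 = cs.simple i * z.1) (hlt : cs.length z.1 < cs.length y.1) :
    hst.heckeOp i (basisElt z) = (X : ℤ[X]) • basisElt z + (X + 1 : ℤ[X]) • basisElt y := by
  have hc := twistedCommutes_of_coe_eq h
  have hasc : ¬ cs.IsLeftDescent z.1 i := (h ▸ hlt).not_gt
  have hstep : hst.step i z = y :=
    Subtype.ext ((hst.coe_step_of_twistedCommutes hc).trans h.symm)
  simp only [hst.heckeOp_basisElt, diagCoeff, offDiagCoeff, hc, hasc, hstep, if_true, if_false]

theorem diagCoeff_add_diagCoeff_step (i : B) (z : TwistedInvolution st) :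
    diagCoeff cs i z + diagCoeff cs i (hst.step i z) = X ^ 2 - 1 := by
  by_cases hc : TwistedCommutes cs i z <;> by_cases h : cs.IsLeftDescent z.1 i <;>
    simp only [diagCoeff, hst.twistedCommutes_step_iff, hst.isLeftDescent_step_iff, hc, h,
      not_true, not_false_eq_true, if_true, if_false] <;> ring

theorem offDiagCoeff_mul_offDiagCoeff_step (i : B) (z : TwistedInvolution st) :
    offDiagCoeff cs i z * offDiagCoeff cs i (hst.step i z) =
      diagCoeff cs i z * diagCoeff cs i (hst.step i z) + X ^ 2 := by
  by_cases hc : TwistedCommutes cs i z <;> by_cases h : cs.IsLeftDescent z.1 i <;>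
    simp only [diagCoeff, offDiagCoeff, hst.twistedCommutes_step_iff, hst.isLeftDescent_step_iff,
      hc, h, not_true, not_false_eq_true, if_true, if_false] <;> ring

theorem heckeOp_mul_self (i : B) :
    hst.heckeOp i * hst.heckeOp i = ((X ^ 2 : ℤ[X]) - 1) • hst.heckeOp i + (X ^ 2 : ℤ[X]) • 1 := by
  refine Finsupp.lhom_ext' fun z => LinearMap.ext_ring ?_
  change hst.heckeOp i (hst.heckeOp i (basisElt z)) =
    ((X ^ 2 : ℤ[X]) - 1) • hst.heckeOp i (basisElt z) + (X ^ 2 : ℤ[X]) • basisElt z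
  have hadd := hst.diagCoeff_add_diagCoeff_step i z
  have hmul := hst.offDiagCoeff_mul_offDiagCoeff_step i z
  rw [hst.heckeOp_basisElt, map_add, map_smul, map_smul, hst.heckeOp_basisElt,
    hst.heckeOp_basisElt, hst.step_step]
  match_scalars
  · linear_combination hmul + diagCoeff cs i z * hadd
  · linear_combination offDiagCoeff cs i z * hadd

theorem heckeOp_basisElt_of_length_eq {i : B} {z : TwistedInvolution st}
    (h : cs.length (hst.twistedConj (cs.simple i) z).1 = cs.length z.1 + 2) :
    hst.heckeOp i (basisElt z) = basisElt (hst.twistedConj (cs.simple i) z) := by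
  have hc : ¬ TwistedCommutes cs i z := fun hc => by
    rw [hst.twistedConj_simple_eq_self_iff.2 hc] at h
    omega
  have hasc : ¬ cs.IsLeftDescent z.1 i := fun hdesc => by
    have := hst.length_step_of_not_isLeftDescent (mt hst.twistedCommutes_step_iff.1 hc)
      (fun h' => hst.isLeftDescent_step_iff.1 h' hdesc)
    rw [hst.step_step, hst.step_of_not_twistedCommutes hc] at this
    omega
  simp [hst.heckeOp_basisElt, diagCoeff, offDiagCoeff, hc, hasc, hst.step_of_not_twistedCommutes hc]

theorem prod_map_heckeOp_basisElt {ω : List B} {z : TwistedInvolution st}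
    (h : cs.length (hst.twistedConj (cs.wordProd ω) z).1 = cs.length z.1 + 2 * ω.length) :
    (ω.map hst.heckeOp).prod (basisElt z) = basisElt (hst.twistedConj (cs.wordProd ω) z) := by
  induction ω with
  | nil =>
    rw [show hst.twistedConj (cs.wordProd []) z = z from Subtype.ext (by simp [twistedConj])]
    rfl
  | cons i ω ih =>
    have hstep := hst.length_twistedConj_le (cs.simple i) (hst.twistedConj (cs.wordProd ω) z)
    have htail := hst.length_twistedConj_le (cs.wordProd ω) z
    have hω := cs.length_wordProd_le ω
    rw [cs.wordProd_cons, hst.twistedConj_mul, List.length_cons] at h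
    rw [cs.length_simple] at hstep
    rw [List.map_cons, List.prod_cons, Module.End.mul_apply, ih (by omega), cs.wordProd_cons,
      hst.twistedConj_mul, hst.heckeOp_basisElt_of_length_eq (by omega)]

theorem alternatingProd_heckeOp_basisElt {i j : B} {k : ℕ} {z : TwistedInvolution st}
    (h : cs.length (hst.twistedConj (alternatingProd cs.simple i j k) z).1 =
      cs.length z.1 + 2 * k) :
    alternatingProd hst.heckeOp i j k (basisElt z) =
      basisElt (hst.twistedConj (alternatingProd cs.simple i j k) z) :=
  hst.prod_map_heckeOp_basisElt (h.trans (by rw [length_alternatingWord]))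

end IsDiagramInvolution

end HeckeOperators

section DihedralOrbits

variable {B W : Type*} [Group W] {M : CoxeterMatrix B} {cs : CoxeterSystem M W} {st : W ≃* W}

variable {i j r : B} {x : W} {z : TwistedInvolution st}

theorem alternatingProd_simple_mul_eq_mul_apply {i' j' : B}
    (hi : cs.simple i' * x = x * st (cs.simple i))
    (hj : cs.simple j' * x = x * st (cs.simple j)) (k : ℕ) :
    alternatingProd cs.simple i' j' k * x = x * st (alternatingProd cs.simple i j k) := by
  induction k generalizing i j i' j' with
  | zero => simp
  | succ k ih =>
    rw [alternatingProd_succ, alternatingProd_succ, map_mul, mul_assoc, hj, ← mul_assoc, ih hj hi,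
      mul_assoc]

theorem mul_inv_apply_alternatingProd {i' j' : B}
    (hi : cs.simple i' * x = x * st (cs.simple i))
    (hj : cs.simple j' * x = x * st (cs.simple j)) (k : ℕ) :
    x * (st (alternatingProd cs.simple i j k))⁻¹ =
      (alternatingProd cs.simple i' j' k)⁻¹ * x := by
  rw [mul_inv_eq_iff_eq_mul, mul_assoc, ← alternatingProd_simple_mul_eq_mul_apply hi hj,
    inv_mul_cancel_left]

theorem exists_coe_eq_alternatingProd_simple_mul {k : ℕ}
    (hk : orderOf (cs.simple i * cs.simple j) ∣ k)
    (h : alternatingProd cs.simple i j k * z.1 = z.1 * st (alternatingProd cs.simple i j k)) :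
    ∃ y : TwistedInvolution st, y.1 = alternatingProd cs.simple i j k * z.1 :=
  ⟨⟨_, apply_mul_eq_inv (by
    rw [mul_assoc, ← h, alternatingProd_simple_mul_cancel_left cs hk])⟩, rfl⟩

namespace IsDiagramInvolution

variable (hst : IsDiagramInvolution cs st)
include hst

theorem simple_mul_eq_mul_apply_simple_symm
    (h : cs.simple i * z.1 = z.1 * st (cs.simple j)) :
    cs.simple j * z.1 = z.1 * st (cs.simple i) := by
  simpa [z.2, hst.apply_apply, ← map_inv] using congrArg (fun w => (st w)⁻¹) h.symm

theorem not_isLeftDescent_mul_inv_apply_succ {k : ℕ} (hz : IsDihedralMinimal cs i j z.1)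
    (hk : k + 1 ≤ orderOf (cs.simple i * cs.simple j)) (hr : ¬ cs.IsLeftDescent z.1 r)
    (hj : cs.simple r * z.1 ≠ z.1 * st (cs.simple j))
    (hi : k + 1 = orderOf (cs.simple i * cs.simple j) →
      cs.simple r * z.1 ≠ z.1 * st (cs.simple i))
    (hasc : ¬ cs.IsLeftDescent (z.1 * (st (alternatingProd cs.simple i j k))⁻¹) r) :
    ¬ cs.IsLeftDescent (z.1 * (st (alternatingProd cs.simple i j (k + 1)))⁻¹) r := by
  intro hdesc
  set x := alternatingProd cs.simple i j k with hx
  obtain ⟨l, hl⟩ := hst.exists_simple (alternatingLetter i j k)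
  obtain ⟨p, hp⟩ : ∃ p, alternatingProd cs.simple i j (k + 1) = x * p :=
    ⟨_, (mul_inv_cancel_left _ _).symm⟩
  have hconj : p = x⁻¹ * cs.simple (alternatingLetter i j k) * x := by
    rw [mul_assoc, eq_inv_mul_iff_mul_eq, ← hp, alternatingProd_succ']
  have hp_inv : p⁻¹ = p := by simp [hconj, mul_assoc]
  have hp_mem : p ∈ Subgroup.closure {cs.simple i, cs.simple j} := by
    rw [← inv_mul_eq_of_eq_mul hp]
    exact mul_mem (inv_mem (alternatingProd_simple_mem_closure cs i j k))
      (alternatingProd_simple_mem_closure cs i j (k + 1))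
  have hrp : cs.simple r * z.1 = z.1 * st p := by
    rw [alternatingProd_succ', map_mul, hl, mul_inv_rev, cs.inv_simple, ← mul_assoc] at hdesc
    have h := simple_mul_eq_mul_simple cs hasc hdesc
    rw [← mul_assoc, mul_inv_eq_iff_eq_mul, ← hl] at h
    simp [h, hconj, mul_assoc]
  have hlength : cs.length (p * z.1) = cs.length z.1 + 1 := by
    rw [← hst.length_mul_inv_apply, ← map_inv, hp_inv, ← hrp, cs.not_isLeftDescent_iff.1 hr]
  rcases eq_simple_of_length_mul_eq_add_one cs (by omega) hz hp_mem hlength with h | h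
  · have hdvd : orderOf (cs.simple i * cs.simple j) ∣ k + 1 := by
      rw [← alternatingProd_simple_swap_iff, hp, h, alternatingProd_succ]
    exact hi (hk.antisymm (Nat.le_of_dvd k.succ_pos hdvd)) (h ▸ hrp)
  · exact hj (h ▸ hrp)

theorem isDihedralMinimal_mul_inv_apply {k : ℕ} (hz : IsDihedralMinimal cs i j z.1)
    (hk : k ≤ orderOf (cs.simple i * cs.simple j))
    (hj : ∀ r, r = i ∨ r = j → cs.simple r * z.1 ≠ z.1 * st (cs.simple j))
    (hi : k = orderOf (cs.simple i * cs.simple j) →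
      ∀ r, r = i ∨ r = j → cs.simple r * z.1 ≠ z.1 * st (cs.simple i)) :
    IsDihedralMinimal cs i j (z.1 * (st (alternatingProd cs.simple i j k))⁻¹) := by
  induction k with
  | zero => simpa using hz
  | succ k ih =>
    have hmin := ih (by omega) (by omega)
    have hstep {r : B} (hr : r = i ∨ r = j) (hzr : ¬ cs.IsLeftDescent z.1 r) :=
      hst.not_isLeftDescent_mul_inv_apply_succ hz hk hzr (hj r hr) fun h => hi h r hr
    exact ⟨hstep (Or.inl rfl) hz.1 hmin.1, hstep (Or.inr rfl) hz.2 hmin.2⟩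

theorem length_twistedConj_alternatingProd {k : ℕ}
    (hz : IsDihedralMinimal cs i j z.1) (hk : k ≤ orderOf (cs.simple i * cs.simple j))
    (hmin : IsDihedralMinimal cs i j (z.1 * (st (alternatingProd cs.simple i j k))⁻¹)) :
    cs.length (hst.twistedConj (alternatingProd cs.simple i j k) z).1 = cs.length z.1 + 2 * k := by
  rw [coe_twistedConj, mul_assoc, length_alternatingProd_simple_mul cs (Or.inr hk) hmin,
    hst.length_mul_inv_apply, length_alternatingProd_simple_mul cs (Or.inr hk) hz]
  ring

theorem braid_heckeOp_basisElt_of_forall_ne (hz : IsDihedralMinimal cs i j z.1)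
    (hi : ∀ r, r = i ∨ r = j → cs.simple r * z.1 ≠ z.1 * st (cs.simple i))
    (hj : ∀ r, r = i ∨ r = j → cs.simple r * z.1 ≠ z.1 * st (cs.simple j)) :
    alternatingProd hst.heckeOp i j (orderOf (cs.simple i * cs.simple j)) (basisElt z) =
      alternatingProd hst.heckeOp j i (orderOf (cs.simple i * cs.simple j)) (basisElt z) := by
  have hmin := hst.isDihedralMinimal_mul_inv_apply hz le_rfl hj fun _ => hi
  have hswap := (alternatingProd_simple_swap_iff cs).2
    (dvd_refl (orderOf (cs.simple i * cs.simple j)))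
  have hlen := hst.length_twistedConj_alternatingProd hz le_rfl hmin
  rw [hst.alternatingProd_heckeOp_basisElt hlen, hswap,
    hst.alternatingProd_heckeOp_basisElt (hswap ▸ hlen)]

theorem braid_heckeOp_basisElt_of_twistedCommutes_left (hz : IsDihedralMinimal cs i j z.1)
    (hm : orderOf (cs.simple i * cs.simple j) ≠ 0) (hi : TwistedCommutes cs i z)
    (hj : ∀ r, r = i ∨ r = j → cs.simple r * z.1 ≠ z.1 * st (cs.simple j)) :
    alternatingProd hst.heckeOp i j (orderOf (cs.simple i * cs.simple j)) (basisElt z) =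
      alternatingProd hst.heckeOp j i (orderOf (cs.simple i * cs.simple j)) (basisElt z) := by
  obtain ⟨n, hn⟩ := Nat.exists_eq_add_one_of_ne_zero hm
  have hmin : IsDihedralMinimal cs i j (z.1 * (st (alternatingProd cs.simple i j n))⁻¹) :=
    hst.isDihedralMinimal_mul_inv_apply hz (by omega) hj (by omega)
  have hlen := hst.length_twistedConj_alternatingProd hz (k := n) (by omega) hmin
  have hswap : alternatingProd cs.simple i j (n + 1) = alternatingProd cs.simple j i (n + 1) :=
    (alternatingProd_simple_swap_iff cs).2 hn.dvd
  have hy := hst.coe_step_of_twistedCommutes hi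
  have hylen := cs.not_isLeftDescent_iff.1 hz.1
  rw [← hy] at hylen
  have hcoe : (hst.twistedConj (alternatingProd cs.simple i j n) (hst.step i z)).1 =
      cs.simple (alternatingLetter i j n) *
        (hst.twistedConj (alternatingProd cs.simple i j n) z).1 := by
    simp only [coe_twistedConj, hy, ← mul_assoc, ← alternatingProd_succ', hswap,
      alternatingProd_succ]
  have hlen' : cs.length (hst.twistedConj (alternatingProd cs.simple i j n) (hst.step i z)).1 =
      cs.length (hst.step i z).1 + 2 * n := by
    rw [hcoe, coe_twistedConj, ← mul_assoc, ← mul_assoc, ← alternatingProd_succ', mul_assoc,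
      length_alternatingProd_simple_mul cs (Or.inr hn.ge) hmin, hst.length_mul_inv_apply,
      length_alternatingProd_simple_mul cs (Or.inr (by omega)) hz]
    omega
  rw [hn, alternatingProd_succ', alternatingProd_succ, Module.End.mul_apply, Module.End.mul_apply,
    hst.alternatingProd_heckeOp_basisElt hlen,
    hst.heckeOp_basisElt_of_coe_eq hcoe (by omega), hst.heckeOp_basisElt_of_coe_eq hy (by omega),
    map_add, map_smul, map_smul, hst.alternatingProd_heckeOp_basisElt hlen,
    hst.alternatingProd_heckeOp_basisElt hlen']

theorem coe_twistedConj_alternatingProd_step (hi : TwistedCommutes cs i z)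
    (hj : TwistedCommutes cs j z) (k : ℕ) :
    (hst.twistedConj (alternatingProd cs.simple i j k) (hst.step i z)).1 =
      alternatingProd cs.simple j i (k + 1) * (alternatingProd cs.simple i j k)⁻¹ * z.1 := by
  rw [coe_twistedConj, hst.coe_step_of_twistedCommutes hi, ← mul_assoc, ← alternatingProd_succ,
    mul_assoc, mul_inv_apply_alternatingProd hi hj, mul_assoc]

theorem alternatingProd_succ_heckeOp_basisElt_of_twistedCommutes
    (hz : IsDihedralMinimal cs i j z.1) (hi : TwistedCommutes cs i z)
    (hj : TwistedCommutes cs j z) {k : ℕ} (hk : 2 * k + 1 ≤ orderOf (cs.simple i * cs.simple j)) :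
    alternatingProd hst.heckeOp j i (k + 1) (basisElt z) =
      (X : ℤ[X]) • alternatingProd hst.heckeOp i j k (basisElt z) +
        (X + 1 : ℤ[X]) •
          basisElt (hst.twistedConj (alternatingProd cs.simple i j k) (hst.step i z)) := by
  have hy := hst.coe_step_of_twistedCommutes hi
  have hylen := cs.not_isLeftDescent_iff.1 hz.1
  rw [← hy] at hylen
  have hlen : cs.length (hst.twistedConj (alternatingProd cs.simple i j k) (hst.step i z)).1 =
      cs.length (hst.step i z).1 + 2 * k := by
    rw [hst.coe_twistedConj_alternatingProd_step hi hj,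
      length_alternatingProd_simple_mul_inv_mul cs (by omega) hz]
    omega
  rw [alternatingProd_succ, Module.End.mul_apply, hst.heckeOp_basisElt_of_coe_eq hy (by omega),
    map_add, map_smul, map_smul, hst.alternatingProd_heckeOp_basisElt hlen]

theorem braid_heckeOp_basisElt_of_twistedCommutes_of_odd (hz : IsDihedralMinimal cs i j z.1)
    (hi : TwistedCommutes cs i z) (hj : TwistedCommutes cs j z) {h : ℕ}
    (hm : orderOf (cs.simple i * cs.simple j) = 2 * h + 1) :
    alternatingProd hst.heckeOp i j (2 * h + 1) (basisElt z) =
      alternatingProd hst.heckeOp j i (2 * h + 1) (basisElt z) := by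
  have hm' := (orderOf_simple_mul_comm cs i j).trans hm
  have hmid : hst.twistedConj (alternatingProd cs.simple i j h) (hst.step i z) =
      hst.twistedConj (alternatingProd cs.simple j i h) (hst.step j z) := by
    ext
    rw [hst.coe_twistedConj_alternatingProd_step hi hj,
      hst.coe_twistedConj_alternatingProd_step hj hi,
      alternatingProd_simple_mul_inv_of_add_eq cs (by omega),
      alternatingProd_simple_mul_inv_of_add_eq cs (by omega), orderOf_simple_mul_comm,
      (alternatingProd_simple_swap_iff cs).2 dvd_rfl]
  refine alternatingProd_two_mul_add_one_apply_eq (c := -X) hst.heckeOp_mul_self (neg_sq X) ?_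
  rw [hst.alternatingProd_succ_heckeOp_basisElt_of_twistedCommutes hz hi hj hm.ge,
    hst.alternatingProd_succ_heckeOp_basisElt_of_twistedCommutes hz.symm hj hi hm'.ge, hmid]
  module

theorem alternatingProd_add_two_heckeOp_basisElt_of_twistedCommutes
    (hz : IsDihedralMinimal cs i j z.1) (hi : TwistedCommutes cs i z)
    (hj : TwistedCommutes cs j z) {h : ℕ}
    (hm : orderOf (cs.simple i * cs.simple j) = 2 * h + 2) {y : TwistedInvolution st}
    (hy : y.1 = alternatingProd cs.simple i j (2 * h + 2) * z.1) :
    alternatingProd hst.heckeOp j i (h + 2) (basisElt z) =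
      (X : ℤ[X]) • alternatingProd hst.heckeOp i j (h + 1) (basisElt z) +
        (X : ℤ[X]) • alternatingProd hst.heckeOp j i (h + 1) (basisElt z) -
        (X ^ 2 : ℤ[X]) • alternatingProd hst.heckeOp i j h (basisElt z) +
        ((X + 1) ^ 2 : ℤ[X]) • basisElt y := by
  have hcoe := hst.coe_twistedConj_alternatingProd_step hi hj h
  have hlen := congrArg cs.length hcoe
  rw [length_alternatingProd_simple_mul_inv_mul cs (by omega) hz] at hlen
  have hylen : cs.length y.1 = 2 * h + 2 + cs.length z.1 := by
    rw [hy, length_alternatingProd_simple_mul cs (Or.inr hm.ge) hz]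
  have hy' : y.1 = cs.simple (alternatingLetter j i (h + 1)) *
      (hst.twistedConj (alternatingProd cs.simple i j h) (hst.step i z)).1 := by
    rw [hcoe, ← mul_assoc, ← mul_assoc, ← alternatingProd_succ',
      alternatingProd_simple_mul_inv_of_add_eq cs (by omega), hm, hy]
  have hB := hst.alternatingProd_succ_heckeOp_basisElt_of_twistedCommutes hz hi hj (k := h)
    (by omega)
  have hA : hst.heckeOp (alternatingLetter j i (h + 1))
      (alternatingProd hst.heckeOp i j h (basisElt z)) =
        alternatingProd hst.heckeOp i j (h + 1) (basisElt z) := by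
    rw [alternatingProd_succ', alternatingLetter_succ, Module.End.mul_apply]
  rw [alternatingProd_succ', Module.End.mul_apply, hB, map_add, map_smul, map_smul, hA,
    hst.heckeOp_basisElt_of_coe_eq hy' (by omega)]
  module

theorem braid_heckeOp_basisElt_of_twistedCommutes_of_even (hz : IsDihedralMinimal cs i j z.1)
    (hi : TwistedCommutes cs i z) (hj : TwistedCommutes cs j z) {h : ℕ}
    (hm : orderOf (cs.simple i * cs.simple j) = 2 * h + 2) :
    alternatingProd hst.heckeOp i j (2 * h + 2) (basisElt z) =
      alternatingProd hst.heckeOp j i (2 * h + 2) (basisElt z) := by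
  have hm' := (orderOf_simple_mul_comm cs i j).trans hm
  obtain ⟨y, hy⟩ := exists_coe_eq_alternatingProd_simple_mul hm.dvd
    (alternatingProd_simple_mul_eq_mul_apply hi hj _)
  have hy' := hy
  rw [(alternatingProd_simple_swap_iff cs).2 hm.dvd] at hy'
  refine alternatingProd_two_mul_add_two_apply_eq hst.heckeOp_mul_self ?_
  rw [hst.alternatingProd_add_two_heckeOp_basisElt_of_twistedCommutes hz hi hj hm hy,
    hst.alternatingProd_add_two_heckeOp_basisElt_of_twistedCommutes hz.symm hj hi hm' hy']
  module

theorem coe_twistedConj_alternatingProd_of_swap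
    (hij : cs.simple i * z.1 = z.1 * st (cs.simple j)) (k : ℕ) :
    (hst.twistedConj (alternatingProd cs.simple i j k) z).1 =
      alternatingProd cs.simple i j k * (alternatingProd cs.simple j i k)⁻¹ * z.1 := by
  rw [coe_twistedConj, mul_assoc, mul_inv_apply_alternatingProd
    (hst.simple_mul_eq_mul_apply_simple_symm hij) hij, mul_assoc]

theorem alternatingProd_heckeOp_basisElt_of_swap (hz : IsDihedralMinimal cs i j z.1)
    (hij : cs.simple i * z.1 = z.1 * st (cs.simple j)) {k : ℕ}
    (hk : 2 * k ≤ orderOf (cs.simple i * cs.simple j)) :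
    alternatingProd hst.heckeOp i j k (basisElt z) =
      basisElt (hst.twistedConj (alternatingProd cs.simple i j k) z) := by
  rw [← orderOf_simple_mul_comm] at hk
  refine hst.alternatingProd_heckeOp_basisElt ?_
  rw [hst.coe_twistedConj_alternatingProd_of_swap hij,
    length_alternatingProd_simple_mul_inv_mul cs (by omega) hz.symm]
  ring

theorem braid_heckeOp_basisElt_of_swap_of_even (hz : IsDihedralMinimal cs i j z.1)
    (hij : cs.simple i * z.1 = z.1 * st (cs.simple j)) {h : ℕ}
    (hm : orderOf (cs.simple i * cs.simple j) = 2 * h) :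
    alternatingProd hst.heckeOp i j (2 * h) (basisElt z) =
      alternatingProd hst.heckeOp j i (2 * h) (basisElt z) := by
  have hji := hst.simple_mul_eq_mul_apply_simple_symm hij
  have hm' := (orderOf_simple_mul_comm cs i j).trans hm
  have hmid : hst.twistedConj (alternatingProd cs.simple i j h) z =
      hst.twistedConj (alternatingProd cs.simple j i h) z := by
    ext
    rw [hst.coe_twistedConj_alternatingProd_of_swap hij,
      hst.coe_twistedConj_alternatingProd_of_swap hji,
      alternatingProd_simple_mul_inv_of_add_eq cs (by omega),
      alternatingProd_simple_mul_inv_of_add_eq cs (by omega), orderOf_simple_mul_comm,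
      (alternatingProd_simple_swap_iff cs).2 dvd_rfl]
  refine alternatingProd_two_mul_apply_eq hst.heckeOp_mul_self ?_
  rw [hst.alternatingProd_heckeOp_basisElt_of_swap hz hij hm.ge,
    hst.alternatingProd_heckeOp_basisElt_of_swap hz.symm hji hm'.ge, hmid]

theorem alternatingProd_succ_heckeOp_basisElt_of_swap (hz : IsDihedralMinimal cs i j z.1)
    (hij : cs.simple i * z.1 = z.1 * st (cs.simple j)) {h : ℕ}
    (hm : orderOf (cs.simple i * cs.simple j) = 2 * h + 1) {y : TwistedInvolution st}
    (hy : y.1 = alternatingProd cs.simple i j (2 * h + 1) * z.1) :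
    alternatingProd hst.heckeOp i j (h + 1) (basisElt z) =
      (X : ℤ[X]) • alternatingProd hst.heckeOp i j h (basisElt z) +
        (X + 1 : ℤ[X]) • basisElt y := by
  have hm' := (orderOf_simple_mul_comm cs i j).trans hm
  have hcoe := hst.coe_twistedConj_alternatingProd_of_swap hij h
  have hlen := congrArg cs.length hcoe
  rw [length_alternatingProd_simple_mul_inv_mul cs (by omega) hz.symm] at hlen
  have hylen : cs.length y.1 = 2 * h + 1 + cs.length z.1 := by
    rw [hy, length_alternatingProd_simple_mul cs (Or.inr hm.ge) hz]
  have hy' : y.1 = cs.simple (alternatingLetter i j h) *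
      (hst.twistedConj (alternatingProd cs.simple i j h) z).1 := by
    rw [hcoe, ← mul_assoc, ← mul_assoc, ← alternatingProd_succ',
      alternatingProd_simple_mul_inv_of_add_eq cs (by omega), hm', hy,
      (alternatingProd_simple_swap_iff cs).2 hm.dvd]
  rw [alternatingProd_succ', Module.End.mul_apply,
    hst.alternatingProd_heckeOp_basisElt_of_swap hz hij (by omega),
    hst.heckeOp_basisElt_of_coe_eq hy' (by omega)]

theorem braid_heckeOp_basisElt_of_swap_of_odd (hz : IsDihedralMinimal cs i j z.1)
    (hij : cs.simple i * z.1 = z.1 * st (cs.simple j)) {h : ℕ}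
    (hm : orderOf (cs.simple i * cs.simple j) = 2 * h + 1) :
    alternatingProd hst.heckeOp i j (2 * h + 1) (basisElt z) =
      alternatingProd hst.heckeOp j i (2 * h + 1) (basisElt z) := by
  have hji := hst.simple_mul_eq_mul_apply_simple_symm hij
  have hm' := (orderOf_simple_mul_comm cs i j).trans hm
  have hswap := (alternatingProd_simple_swap_iff cs).2 hm.dvd
  obtain ⟨y, hy⟩ := exists_coe_eq_alternatingProd_simple_mul hm.dvd
    (by rw [← alternatingProd_simple_mul_eq_mul_apply hji hij, hswap])
  refine alternatingProd_two_mul_add_one_apply_eq hst.heckeOp_mul_self rfl ?_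
  rw [hst.alternatingProd_succ_heckeOp_basisElt_of_swap hz hij hm hy,
    hst.alternatingProd_succ_heckeOp_basisElt_of_swap hz.symm hji hm' (hswap ▸ hy)]
  module

theorem braid_heckeOp_basisElt_of_isDihedralMinimal (hz : IsDihedralMinimal cs i j z.1)
    (hm : orderOf (cs.simple i * cs.simple j) ≠ 0) :
    alternatingProd hst.heckeOp i j (orderOf (cs.simple i * cs.simple j)) (basisElt z) =
      alternatingProd hst.heckeOp j i (orderOf (cs.simple i * cs.simple j)) (basisElt z) := by
  by_cases hij : cs.simple i * z.1 = z.1 * st (cs.simple j)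
  · rcases Nat.even_or_odd' (orderOf (cs.simple i * cs.simple j)) with ⟨h, hm | hm⟩ <;> rw [hm]
    exacts [hst.braid_heckeOp_basisElt_of_swap_of_even hz hij hm,
      hst.braid_heckeOp_basisElt_of_swap_of_odd hz hij hm]
  have hji : cs.simple j * z.1 ≠ z.1 * st (cs.simple i) :=
    mt hst.simple_mul_eq_mul_apply_simple_symm hij
  by_cases hi : TwistedCommutes cs i z <;> by_cases hj : TwistedCommutes cs j z
  · rcases Nat.even_or_odd' (orderOf (cs.simple i * cs.simple j)) with ⟨h, hm' | hm'⟩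
    · obtain ⟨h, rfl⟩ := Nat.exists_eq_add_one_of_ne_zero (n := h) (by omega)
      rw [mul_add_one] at hm'
      exact hm' ▸ hst.braid_heckeOp_basisElt_of_twistedCommutes_of_even hz hi hj hm'
    · exact hm' ▸ hst.braid_heckeOp_basisElt_of_twistedCommutes_of_odd hz hi hj hm'
  · exact hst.braid_heckeOp_basisElt_of_twistedCommutes_left hz hm hi
      (by rintro r (rfl | rfl) <;> assumption)
  · rw [← orderOf_simple_mul_comm] at hm ⊢
    exact (hst.braid_heckeOp_basisElt_of_twistedCommutes_left hz.symm hm hj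
      (by rintro r (rfl | rfl) <;> assumption)).symm
  · exact hst.braid_heckeOp_basisElt_of_forall_ne hz (by rintro r (rfl | rfl) <;> assumption)
      (by rintro r (rfl | rfl) <;> assumption)

end IsDiagramInvolution

end DihedralOrbits

section BraidRelations

variable {B W : Type*} [Group W] {M : CoxeterMatrix B} {cs : CoxeterSystem M W} {st : W ≃* W}

namespace IsDiagramInvolution

variable (hst : IsDiagramInvolution cs st)
include hst

theorem length_step_lt_of_isLeftDescent {i : B} {z : TwistedInvolution st}
    (h : cs.IsLeftDescent z.1 i) : cs.length (hst.step i z).1 < cs.length z.1 := by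
  by_cases hc : TwistedCommutes cs i z
  · rwa [hst.coe_step_of_twistedCommutes hc]
  · have hlength := hst.length_step_of_not_isLeftDescent (mt hst.twistedCommutes_step_iff.1 hc)
      (fun h' => hst.isLeftDescent_step_iff.1 h' h)
    rw [hst.step_step] at hlength
    omega

theorem offDiagCoeff_step_ne_zero {i : B} {z : TwistedInvolution st}
    (h : cs.IsLeftDescent z.1 i) : offDiagCoeff cs i (hst.step i z) ≠ 0 := by
  rw [offDiagCoeff, if_neg fun h' => hst.isLeftDescent_step_iff.1 h' h,
    if_neg fun h' => hst.isLeftDescent_step_iff.1 h' h]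
  split_ifs
  exacts [X_add_C_ne_zero 1, one_ne_zero]

theorem braid_heckeOp_basisElt_of_isLeftDescent {i j : B} {z : TwistedInvolution st} {k : ℕ}
    (hj : cs.IsLeftDescent z.1 j)
    (h : alternatingProd hst.heckeOp i j (k + 1) (basisElt (hst.step j z)) =
      alternatingProd hst.heckeOp j i (k + 1) (basisElt (hst.step j z))) :
    alternatingProd hst.heckeOp i j (k + 1) (basisElt z) =
      alternatingProd hst.heckeOp j i (k + 1) (basisElt z) := by
  have hT := alternatingProd_apply_apply_eq hst.heckeOp_mul_self h
  simp only [hst.heckeOp_basisElt, hst.step_step, map_add, map_smul, h, add_right_inj] at hT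
  exact smul_right_injective _ (hst.offDiagCoeff_step_ne_zero hj) hT

theorem satisfiesBraidRelations_heckeOp : SatisfiesBraidRelations cs hst.heckeOp := by
  intro i j hm
  refine Finsupp.lhom_ext' fun z => LinearMap.ext_ring ?_
  change alternatingProd hst.heckeOp i j _ (basisElt z) =
    alternatingProd hst.heckeOp j i _ (basisElt z)
  induction hz : cs.length z.1 using Nat.strong_induction_on generalizing z with
  | _ n ih =>
    subst hz
    by_cases hmin : IsDihedralMinimal cs i j z.1
    · exact hst.braid_heckeOp_basisElt_of_isDihedralMinimal hmin hm
    obtain ⟨k, hk⟩ := Nat.exists_eq_add_one_of_ne_zero hm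
    simp only [hk] at ih ⊢
    rw [IsDihedralMinimal, not_and_or, not_not, not_not] at hmin
    rcases hmin with h | h
    · exact (hst.braid_heckeOp_basisElt_of_isLeftDescent h
        (ih _ (hst.length_step_lt_of_isLeftDescent h) _ rfl).symm).symm
    · exact hst.braid_heckeOp_basisElt_of_isLeftDescent h
        (ih _ (hst.length_step_lt_of_isLeftDescent h) _ rfl)

end IsDiagramInvolution

end BraidRelations

section Polynomials

theorem forall_mk_iff {α : Type*} {p : α → Prop} {q : Subtype p → Prop} {x : Subtype p} {a : α}
    (hx : x.1 = a) : (∀ h : p a, q ⟨a, h⟩) ↔ q x := by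
  subst hx
  exact ⟨fun h => h x.2, fun h _ => h⟩

variable {B W : Type} [Group W] {M : CoxeterMatrix B} {cs : CoxeterSystem M W} {st : W ≃* W}

namespace IsDiagramInvolution

variable (hst : IsDiagramInvolution cs st) {P Q : TwistedInvolution st → W → ℤ[X]}
include hst

theorem xRec_iff : XRec cs st P ↔ (∀ z : TwistedInvolution st, P z 1 = if z.1 = 1 then 1 else 0) ∧
    ∀ i y, cs.IsRightDescent y i → ∀ z, P z y = diagCoeff cs i z * P z (y * cs.simple i) +
      offDiagCoeff cs i z * P (hst.step i z) (y * cs.simple i) := by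
  refine and_congr_right fun _ => forall₃_congr fun i y _ => forall_congr' fun z => ?_
  have hlt : cs.length z.1 < cs.length (cs.simple i * z.1) ↔ ¬ cs.IsLeftDescent z.1 i := by
    rw [cs.not_isLeftDescent_iff]
    have := cs.length_simple_mul z.1 i
    omega
  change _ ∧ (_ → cs.IsLeftDescent z.1 i → _) ∧ _ ∧ (_ → cs.IsLeftDescent z.1 i → _) ↔ _
  rw [hlt, ← TwistedCommutes]
  let q (x : TwistedInvolution st) : Prop := P z y = diagCoeff cs i z * P z (y * cs.simple i) +
    offDiagCoeff cs i z * P x (y * cs.simple i)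
  by_cases hc : TwistedCommutes cs i z
  · refine .trans ?_ (forall_mk_iff (q := q) (hst.coe_step_of_twistedCommutes hc))
    by_cases h : cs.IsLeftDescent z.1 i <;>
      simp [q, diagCoeff, offDiagCoeff, hc, h, show cs.simple i * z.1 = _ from hc]
  · have hstep : (hst.step i z).1 = cs.simple i * z.1 * st (cs.simple i) := by
      rw [hst.step_of_not_twistedCommutes hc, hst.coe_twistedConj_simple]
    refine .trans ?_ (forall_mk_iff (q := q) hstep)
    by_cases h : cs.IsLeftDescent z.1 i <;>
      simp [q, diagCoeff, offDiagCoeff, hc, h, show cs.simple i * z.1 ≠ _ from hc]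

theorem eq_of_xRec (hP : XRec cs st P) (hQ : XRec cs st Q) : P = Q := by
  rw [hst.xRec_iff] at hP hQ
  ext1 z
  ext1 y
  induction hy : cs.length y using Nat.strong_induction_on generalizing y z with
  | _ n ih =>
    subst hy
    rcases eq_or_ne y 1 with rfl | hne
    · rw [hP.1, hQ.1]
    · obtain ⟨i, hi⟩ := cs.exists_rightDescent_of_ne_one hne
      rw [hP.2 i y hi, hQ.2 i y hi, ih _ hi _ _ rfl, ih _ hi _ _ rfl]

theorem X_pow_length_dvd_offDiagCoeff_mul (i : B) (z : TwistedInvolution st) :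
    (X : ℤ[X]) ^ cs.length z.1 ∣ offDiagCoeff cs i z * X ^ cs.length (hst.step i z).1 := by
  by_cases h : cs.IsLeftDescent z.1 i
  · have hasc : ¬ cs.IsLeftDescent (hst.step i z).1 i :=
      fun h' => hst.isLeftDescent_step_iff.1 h' h
    by_cases hc : TwistedCommutes cs i z
    · have hlength : cs.length z.1 = cs.length (hst.step i z).1 + 1 := by
        rw [hst.coe_step_of_twistedCommutes hc, cs.isLeftDescent_iff.1 h]
      rw [offDiagCoeff, if_pos hc, if_pos h, hlength]
      exact ⟨X - 1, by ring⟩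
    · have hlength := hst.length_step_of_not_isLeftDescent
        (mt hst.twistedCommutes_step_iff.1 hc) hasc
      rw [hst.step_step] at hlength
      rw [offDiagCoeff, if_neg hc, if_pos h, hlength, pow_add, mul_comm]
  · have hdesc := hst.isLeftDescent_step_of_not_isLeftDescent h
    have hlt := hst.length_step_lt_of_isLeftDescent hdesc
    rw [hst.step_step] at hlt
    exact (pow_dvd_pow X hlt.le).mul_left _

theorem X_pow_length_dvd_of_xRec (hP : XRec cs st P) (z : TwistedInvolution st) (y : W) :
    X ^ cs.length z.1 ∣ P z y := by
  rw [hst.xRec_iff] at hP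
  induction hy : cs.length y using Nat.strong_induction_on generalizing y z with
  | _ n ih =>
    subst hy
    rcases eq_or_ne y 1 with rfl | hne
    · rw [hP.1]
      split_ifs with hz <;> simp [hz]
    · obtain ⟨i, hi⟩ := cs.exists_rightDescent_of_ne_one hne
      rw [hP.2 i y hi]
      exact ((ih _ hi _ _ rfl).mul_left _).add <| (hst.X_pow_length_dvd_offDiagCoeff_mul i z).trans
        (mul_dvd_mul_left _ (ih _ hi _ _ rfl))

theorem exists_xRec : ∃ P : TwistedInvolution st → W → ℤ[X], XRec cs st P := by
  obtain ⟨f, hf_one, hf⟩ :=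
    exists_map_mul_simple_of_satisfiesBraidRelations hst.satisfiesBraidRelations_heckeOp
  refine ⟨fun z y => f y (basisElt z) ⟨1, by simp⟩,
    hst.xRec_iff.2 ⟨fun z => ?_, fun i y hi z => ?_⟩⟩
  · simp [hf_one, Finsupp.single_apply, Subtype.ext_iff]
  · simp only [hf i y hi, Module.End.mul_apply, hst.heckeOp_basisElt, map_add, map_smul,
      Finsupp.add_apply, Finsupp.smul_apply, smul_eq_mul]

end IsDiagramInvolution

end Polynomials

end LusztigVogan

theorem statement5_general {B W : Type} [Group W] {M : CoxeterMatrix B}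
    (cs : CoxeterSystem M W) (st : W ≃* W)
    (hst_inv : ∀ w, st (st w) = w)
    (hst_S : ∀ i : B, ∃ j : B, st (cs.simple i) = cs.simple j) :
    (∃! P : {z : W // st z = z⁻¹} → W → Polynomial ℤ, XRec cs st P) ∧
    (∀ P : {z : W // st z = z⁻¹} → W → Polynomial ℤ, XRec cs st P →
      ∀ (z : {z : W // st z = z⁻¹}) (y : W), X ^ cs.length z.1 ∣ P z y) := by
  have hst : LusztigVogan.IsDiagramInvolution cs st := ⟨hst_inv, hst_S⟩
  obtain ⟨P, hP⟩ := hst.exists_xRec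
  exact ⟨⟨P, hP, fun _ hQ => hst.eq_of_xRec hQ hP⟩, fun _ hQ => hst.X_pow_length_dvd_of_xRec hQ⟩

/-- **Proposition 1.2.** There is a unique collection of polynomials
`X^z_y ∈ ℤ[u]` (`z ∈ I_*`, `y ∈ W`) with `X^z_1 = δ_{z,1}` satisfying the recursions
1.2(i)–(iv); moreover each `X^z_y` lies in `u^{l(z)} ℤ[u]`. -/
theorem statement5 {B W : Type} [Group W] [Finite B] {M : CoxeterMatrix B}
    (cs : CoxeterSystem M W) (st : W ≃* W)
    (hst_inv : ∀ w, st (st w) = w)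
    (hst_S : ∀ i : B, ∃ j : B, st (cs.simple i) = cs.simple j) :
    (∃! P : {z : W // st z = z⁻¹} → W → Polynomial ℤ, XRec cs st P) ∧
    (∀ P : {z : W // st z = z⁻¹} → W → Polynomial ℤ, XRec cs st P →
      ∀ (z : {z : W // st z = z⁻¹}) (y : W), X ^ cs.length z.1 ∣ P z y) := by
  exact statement5_general cs st hst_inv hst_S
end

section
/- For every (z,y) ∈ I_* × W, the polynomial X^z_y is divisible by u^{l(y)} in ℤ[u] (hence divisible by u^{max(l(z),l(y))}). -/
open Polynomial
open scoped Classical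

/-!
Write `E(z, y) = (ℓ(z) + ℓ(y) + ℓ(yz)) / 2`. By the triangle inequality `E(z, y)` is at least `ℓ(z)`
and `ℓ(y)`, and the sharper bound `u^{E(z, y)} ∣ X^z_y` is compatible with each of the recursions
1.2(i)–(iv), so it follows by a single induction on `y`. In the two recursions with `sz < z` the
term `X^z_{ys}` has a coefficient prime to `u`; there one needs `E(z, y) ≤ E(z, ys)`, that is,
`ℓ(yz) < ℓ(ysz)` when `ys < y` and `sz < z`. This is a form of the strong exchange condition, which
we derive from the action of `W` on signed reflections.
-/

section InversionParity

variable {B W : Type*} [Group W] {M : CoxeterMatrix B} (cs : CoxeterSystem M W)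

/-- The action of the simple reflection `s i` on pairs (group element, parity): conjugation by
`s i` on the first component, with the parity flipped exactly at `s i` itself. These maps generate
the action of `W` on its reflections with signs. -/
noncomputable def signedConj (i : B) : Function.End (W × ZMod 2) :=
  fun a => (cs.simple i * a.1 * cs.simple i, a.2 + if a.1 = cs.simple i then 1 else 0)

theorem simple_mul_rotation_pow (i j : B) (n : ℕ) :
    cs.simple j * (cs.simple i * cs.simple j) ^ n =
      ((cs.simple i * cs.simple j) ^ n)⁻¹ * cs.simple j := by
  have h : SemiconjBy (cs.simple j) (cs.simple i * cs.simple j) (cs.simple i * cs.simple j)⁻¹ := by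
    simp [SemiconjBy, mul_assoc]
  simpa only [inv_pow] using (h.pow_right n).eq

theorem rotation_pow_conj_eq_iff (i j : B) (n k : ℕ) (t : W) :
    (cs.simple i * cs.simple j) ^ n * t * ((cs.simple i * cs.simple j) ^ n)⁻¹ =
        cs.simple j * (cs.simple i * cs.simple j) ^ k ↔
      t = cs.simple j * (cs.simple i * cs.simple j) ^ (2 * n + k) := by
  have hpow : cs.simple j * (cs.simple i * cs.simple j) ^ (2 * n + k) =
      ((cs.simple i * cs.simple j) ^ n)⁻¹ *
        (cs.simple j * (cs.simple i * cs.simple j) ^ k * (cs.simple i * cs.simple j) ^ n) := by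
    rw [show 2 * n + k = n + (k + n) by ring, pow_add, pow_add, ← mul_assoc,
      simple_mul_rotation_pow]
    simp only [mul_assoc]
  rw [hpow, eq_inv_mul_iff_mul_eq, mul_inv_eq_iff_eq_mul]

theorem signedConj_signedConj (i j : B) (a : W × ZMod 2) :
    signedConj cs i (signedConj cs j a) =
      ((cs.simple i * cs.simple j) * a.1 * (cs.simple i * cs.simple j)⁻¹,
        a.2 + ∑ k ∈ Finset.range 2,
          if a.1 = cs.simple j * (cs.simple i * cs.simple j) ^ k then 1 else 0) := by
  have h : cs.simple j * (a.1 * cs.simple j) = cs.simple i ↔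
      a.1 = cs.simple j * (cs.simple i * cs.simple j) := by
    rw [← mul_assoc, ← eq_mul_inv_iff_mul_eq, ← eq_inv_mul_iff_mul_eq, cs.inv_simple]
  simp only [signedConj, h, Finset.sum_range_succ, Finset.sum_range_zero, pow_zero, pow_one,
    mul_one, mul_inv_rev, cs.inv_simple, mul_assoc, add_assoc, zero_add]

theorem signedConj_mul_pow_apply (i j : B) (n : ℕ) (a : W × ZMod 2) :
    ((signedConj cs i * signedConj cs j) ^ n) a =
      ((cs.simple i * cs.simple j) ^ n * a.1 * ((cs.simple i * cs.simple j) ^ n)⁻¹,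
        a.2 + ∑ k ∈ Finset.range (2 * n),
          if a.1 = cs.simple j * (cs.simple i * cs.simple j) ^ k then 1 else 0) := by
  induction n with
  | zero =>
    simp only [pow_zero, one_mul, inv_one, mul_one, mul_zero, Finset.sum_range_zero, add_zero]
    rfl
  | succ n ih =>
    rw [pow_succ']
    change signedConj cs i (signedConj cs j (((signedConj cs i * signedConj cs j) ^ n) a)) = _
    rw [ih, signedConj_signedConj]
    simp only [rotation_pow_conj_eq_iff]
    rw [Nat.mul_succ, Finset.sum_range_add]
    simp [pow_succ', mul_assoc, add_assoc]

/-- The summands of `signedConj_mul_pow_apply` are periodic with period `M i j`, so over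
`2 * M i j` terms each one occurs an even number of times. -/
theorem signedConj_isLiftable : M.IsLiftable (signedConj cs) := by
  intro i j
  funext a
  have hpow := cs.simple_mul_simple_pow i j
  rw [signedConj_mul_pow_apply, two_mul, Finset.sum_range_add]
  simp only [pow_add, hpow, one_mul, CharTwo.add_self_eq_zero, inv_one, mul_one, add_zero]
  rfl

/-- The action of `W` on `W × ZMod 2` extending `signedConj`. -/
noncomputable def signedConjHom : W →* Function.End (W × ZMod 2) :=
  cs.lift ⟨signedConj cs, signedConj_isLiftable cs⟩

theorem signedConjHom_wordProd (ω : List B) (a : W × ZMod 2) :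
    signedConjHom cs (cs.wordProd ω) a =
      (cs.wordProd ω * a.1 * (cs.wordProd ω)⁻¹, a.2 + (cs.rightInvSeq ω).count a.1) := by
  induction ω with
  | nil =>
    simp only [cs.wordProd_nil, map_one, one_mul, inv_one, mul_one, cs.rightInvSeq_nil,
      List.count_nil, Nat.cast_zero, add_zero]
    rfl
  | cons i ω ih =>
    rw [cs.wordProd_cons, map_mul]
    change signedConjHom cs (cs.simple i) (signedConjHom cs (cs.wordProd ω) a) = _
    have h : cs.wordProd ω * (a.1 * (cs.wordProd ω)⁻¹) = cs.simple i ↔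
        (cs.wordProd ω)⁻¹ * (cs.simple i * cs.wordProd ω) = a.1 := by
      rw [← mul_assoc, mul_inv_eq_iff_eq_mul, ← eq_inv_mul_iff_mul_eq, eq_comm]
    rw [ih, signedConjHom, cs.lift_apply_simple]
    simp only [signedConj, h, CoxeterSystem.rightInvSeq, List.count_cons, beq_iff_eq, Nat.cast_add,
      Nat.cast_ite, Nat.cast_one, Nat.cast_zero, mul_inv_rev, cs.inv_simple, mul_assoc, add_assoc]

/-- The parity of the number of occurrences of `t` in the right inversion sequence of any word for
`w`. For a reflection `t` it tells whether `t` is a right inversion of `w`. -/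
noncomputable def inversionParity (w t : W) : ZMod 2 := (signedConjHom cs w (t, 0)).2

theorem inversionParity_wordProd (ω : List B) (t : W) :
    inversionParity cs (cs.wordProd ω) t = (cs.rightInvSeq ω).count t := by
  simp [inversionParity, signedConjHom_wordProd]

theorem signedConjHom_apply (w : W) (a : W × ZMod 2) :
    signedConjHom cs w a = (w * a.1 * w⁻¹, a.2 + inversionParity cs w a.1) := by
  obtain ⟨ω, rfl⟩ := cs.wordProd_surjective w
  rw [signedConjHom_wordProd, inversionParity_wordProd]

theorem inversionParity_mul (x y t : W) :
    inversionParity cs (x * y) t = inversionParity cs y t + inversionParity cs x (y * t * y⁻¹) := by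
  have h : signedConjHom cs (x * y) (t, 0) = signedConjHom cs x (signedConjHom cs y (t, 0)) := by
    rw [map_mul]; rfl
  simpa [signedConjHom_apply] using congrArg Prod.snd h

theorem inversionParity_one (t : W) : inversionParity cs 1 t = 0 := by
  simpa using inversionParity_wordProd cs [] t

theorem inversionParity_simple_self (i : B) :
    inversionParity cs (cs.simple i) (cs.simple i) = 1 := by
  simpa using inversionParity_wordProd cs [i] (cs.simple i)

variable {cs}

theorem inversionParity_self {t : W} (ht : cs.IsReflection t) : inversionParity cs t t = 1 := by
  obtain ⟨x, i, rfl⟩ := ht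
  have hconj : x⁻¹ * (x * cs.simple i * x⁻¹) * x⁻¹⁻¹ = cs.simple i := by group
  have hcancel := inversionParity_mul cs x x⁻¹ (x * cs.simple i * x⁻¹)
  rw [mul_inv_cancel, inversionParity_one, hconj] at hcancel
  rw [inversionParity_mul, inversionParity_mul, hconj, inversionParity_simple_self,
    mul_inv_cancel_right]
  linear_combination -hcancel

theorem isRightInversion_of_inversionParity_eq_one {w t : W} (h : inversionParity cs w t = 1) :
    cs.IsRightInversion w t := by
  obtain ⟨ω, hω, rfl⟩ := cs.exists_isReduced w
  refine cs.isRightInversion_of_mem_rightInvSeq hω (by_contra fun hmem => ?_)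
  simp [inversionParity_wordProd, List.count_eq_zero_of_not_mem hmem] at h

theorem isRightInversion_iff_inversionParity_eq_one {w t : W} (ht : cs.IsReflection t) :
    cs.IsRightInversion w t ↔ inversionParity cs w t = 1 := by
  refine ⟨fun hw => ?_, isRightInversion_of_inversionParity_eq_one⟩
  by_contra hparity
  refine ht.isRightInversion_mul_left_iff.1 (isRightInversion_of_inversionParity_eq_one ?_) hw
  rw [inversionParity_mul, mul_inv_cancel_right, inversionParity_self ht]
  generalize inversionParity cs w t = e at hparity
  decide +revert

theorem isRightInversion_mul_iff {x y t : W} (ht : cs.IsReflection t) :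
    cs.IsRightInversion (x * y) t ↔
      Xor (cs.IsRightInversion y t) (cs.IsRightInversion x (y * t * y⁻¹)) := by
  rw [isRightInversion_iff_inversionParity_eq_one ht,
    isRightInversion_iff_inversionParity_eq_one ht,
    isRightInversion_iff_inversionParity_eq_one (ht.conj y), inversionParity_mul]
  generalize inversionParity cs y t = a
  generalize inversionParity cs x (y * t * y⁻¹) = b
  rw [xor_def]
  decide +revert

end InversionParity

section Length

variable {B W : Type*} [Group W] {M : CoxeterMatrix B} {cs : CoxeterSystem M W}

theorem length_mul_simple_mul_lt {x z : W} {i : B} (hx : ¬ cs.IsRightDescent x i)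
    (hz : cs.IsLeftDescent z i) : cs.length (x * cs.simple i * z) < cs.length (x * z) := by
  have ht : cs.IsReflection (z⁻¹ * cs.simple i * z) := by
    simpa using (cs.isReflection_simple i).conj z⁻¹
  have hconj : z * (z⁻¹ * cs.simple i * z) * z⁻¹ = cs.simple i := by group
  have hz' : cs.IsRightInversion z (z⁻¹ * cs.simple i * z) :=
    ⟨ht, by simpa [mul_assoc, CoxeterSystem.IsLeftDescent] using hz⟩
  have hxz : cs.IsRightInversion (x * z) (z⁻¹ * cs.simple i * z) := by
    rw [isRightInversion_mul_iff ht, hconj, cs.isRightInversion_simple_iff_isRightDescent]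
    exact Or.inl ⟨hz', hx⟩
  simpa [mul_assoc] using hxz.2

theorem simple_mul_eq_mul_simple {w : W} {i j : B} (hw : ¬ cs.IsLeftDescent w i)
    (hwj : cs.IsLeftDescent (w * cs.simple j) i) : cs.simple i * w = w * cs.simple j := by
  have hlt := length_mul_simple_mul_lt (x := w⁻¹) (by rwa [cs.isRightDescent_inv_iff]) hwj
  rw [inv_mul_cancel_left, cs.length_simple, Nat.lt_one_iff, cs.length_eq_zero_iff, ← mul_assoc,
    mul_eq_one_iff_eq_inv, cs.inv_simple, mul_assoc, inv_mul_eq_iff_eq_mul] at hlt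
  exact hlt

theorem length_simple_mul_mul_simple {w : W} {i j : B} (hne : cs.simple i * w ≠ w * cs.simple j)
    (hi : ¬ cs.IsLeftDescent w i) (hj : ¬ cs.IsRightDescent w j) :
    cs.length (cs.simple i * w * cs.simple j) = cs.length w + 2 := by
  have hwj : ¬ cs.IsLeftDescent (w * cs.simple j) i :=
    fun h => hne (simple_mul_eq_mul_simple hi h)
  rw [cs.not_isLeftDescent_iff, ← mul_assoc] at hwj
  rw [cs.not_isRightDescent_iff] at hj
  omega

theorem length_map_le {B' W' : Type*} [Group W'] {M' : CoxeterMatrix B'}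
    {cs' : CoxeterSystem M' W'} {f : W →* W'} (hf : ∀ i, ∃ j, f (cs.simple i) = cs'.simple j)
    (w : W) : cs'.length (f w) ≤ cs.length w := by
  choose σ hσ using hf
  obtain ⟨ω, hω, rfl⟩ := cs.exists_isReduced w
  have hmap : f (cs.wordProd ω) = cs'.wordProd (ω.map σ) := by
    simp [CoxeterSystem.wordProd, map_list_prod, Function.comp_def, hσ]
  rw [hmap, hω.eq, ← List.length_map (f := σ)]
  exact cs'.length_wordProd_le _

theorem rightDescent_induction {p : W → Prop} (w : W) (one : p 1)
    (descent : ∀ w i, cs.IsRightDescent w i → p (w * cs.simple i) → p w) : p w := by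
  induction hn : cs.length w using Nat.strong_induction_on generalizing w with
  | _ n ih =>
    by_cases hw : w = 1
    · exact hw ▸ one
    · obtain ⟨i, hi⟩ := cs.exists_rightDescent_of_ne_one hw
      exact descent w i hi (ih _ (hn ▸ hi) _ rfl)

end Length

section TwistedInvolution

theorem map_mul_eq_inv_of_commute {G : Type*} [Group G] {σ : G →* G} {q z : G} (hq : q⁻¹ = q)
    (hz : σ z = z⁻¹) (hcomm : q * z = z * σ q) : σ (q * z) = (q * z)⁻¹ := by
  rw [map_mul, hz, mul_inv_rev, hq, eq_inv_mul_iff_mul_eq, ← mul_assoc, ← hcomm,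
    mul_inv_cancel_right]

theorem map_mul_mul_map_eq_inv {G : Type*} [Group G] {σ : G →* G} {q z : G} (hq : q⁻¹ = q)
    (hσ : σ (σ q) = q) (hz : σ z = z⁻¹) : σ (q * z * σ q) = (q * z * σ q)⁻¹ := by
  rw [map_mul, map_mul, hz, hσ, mul_inv_rev, mul_inv_rev, hq, ← map_inv, hq, mul_assoc]

variable {B W : Type*} [Group W] {M : CoxeterMatrix B} {cs : CoxeterSystem M W} {st : W ≃* W}

theorem length_map_involution (hst_inv : ∀ w, st (st w) = w)
    (hst_S : ∀ i, ∃ j, st (cs.simple i) = cs.simple j) (w : W) :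
    cs.length (st w) = cs.length w := by
  have hle (w : W) : cs.length (st w) ≤ cs.length w :=
    length_map_le (f := st.toMonoidHom) hst_S w
  exact (hle w).antisymm (by simpa only [hst_inv] using hle (st w))

theorem length_mul_map_simple (hst_inv : ∀ w, st (st w) = w)
    (hst_S : ∀ i, ∃ j, st (cs.simple i) = cs.simple j) {z : W} (hz : st z = z⁻¹) (i : B) :
    cs.length (z * st (cs.simple i)) = cs.length (cs.simple i * z) := by
  rw [← length_map_involution hst_inv hst_S, map_mul, hst_inv, hz, ← cs.length_inv, mul_inv_rev,
    inv_inv, cs.inv_simple]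

theorem length_twistedConj (hst_inv : ∀ w, st (st w) = w)
    (hst_S : ∀ i, ∃ j, st (cs.simple i) = cs.simple j) {z : W} (hz : st z = z⁻¹) {i : B}
    (hne : cs.simple i * z ≠ z * st (cs.simple i)) (hi : ¬ cs.IsLeftDescent z i) :
    cs.length (cs.simple i * z * st (cs.simple i)) = cs.length z + 2 := by
  have hlen := length_mul_map_simple hst_inv hst_S hz i
  obtain ⟨j, hj⟩ := hst_S i
  rw [hj] at hne hlen ⊢
  exact length_simple_mul_mul_simple hne hi (by rwa [CoxeterSystem.IsRightDescent, hlen])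

end TwistedInvolution

section Semiperimeter

variable {B W : Type*} [Group W] {M : CoxeterMatrix B} {cs : CoxeterSystem M W}

/-- The semiperimeter of the triangle with vertices `1`, `y⁻¹`, `z` in the Cayley graph. The
perimeter is even because the length is a homomorphism modulo `2`, so the division is exact. -/
noncomputable def semiperimeter (cs : CoxeterSystem M W) (z y : W) : ℕ :=
  (cs.length z + cs.length y + cs.length (y * z)) / 2

theorem max_length_le_semiperimeter (z y : W) :
    max (cs.length z) (cs.length y) ≤ semiperimeter cs z y := by
  have hz := cs.length_le_length_mul_add_left y z
  have hy := cs.length_le_length_mul_add_right y z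
  rw [semiperimeter]
  omega

variable {y z : W} {i j : B}

theorem semiperimeter_le_of_isLeftDescent (hy : cs.IsRightDescent y i)
    (hz : cs.IsLeftDescent z i) :
    semiperimeter cs z y ≤ semiperimeter cs z (y * cs.simple i) := by
  have hlt := length_mul_simple_mul_lt (cs.isRightDescent_iff_not_isRightDescent_mul.1 hy) hz
  rw [cs.simple_mul_simple_cancel_right] at hlt
  rw [cs.isRightDescent_iff] at hy
  simp only [semiperimeter]
  omega

theorem semiperimeter_le_add_one_of_commute (hy : cs.IsRightDescent y i)
    (hcomm : cs.simple i * z = z * cs.simple j) :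
    semiperimeter cs z y ≤ 1 + semiperimeter cs z (y * cs.simple i) := by
  have hyz : y * z = y * cs.simple i * z * cs.simple j := by
    rw [mul_assoc _ z, ← hcomm, mul_assoc, cs.simple_mul_simple_cancel_left]
  have hlen := cs.length_mul_simple (y * cs.simple i * z) j
  rw [cs.isRightDescent_iff] at hy
  simp only [semiperimeter, hyz]
  omega

theorem semiperimeter_le_simple_mul (hy : cs.IsRightDescent y i) (hz : ¬ cs.IsLeftDescent z i) :
    semiperimeter cs z y ≤ semiperimeter cs (cs.simple i * z) (y * cs.simple i) := by
  rw [cs.isRightDescent_iff] at hy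
  rw [cs.not_isLeftDescent_iff] at hz
  simp only [semiperimeter, mul_assoc, cs.simple_mul_simple_cancel_left]
  omega

theorem semiperimeter_le_one_add_simple_mul (hy : cs.IsRightDescent y i) :
    semiperimeter cs z y ≤ 1 + semiperimeter cs (cs.simple i * z) (y * cs.simple i) := by
  have hz := cs.length_simple_mul z i
  rw [cs.isRightDescent_iff] at hy
  simp only [semiperimeter, mul_assoc, cs.simple_mul_simple_cancel_left]
  omega

theorem semiperimeter_le_simple_mul_mul_simple (hy : cs.IsRightDescent y i)
    (hz : cs.length (cs.simple i * z * cs.simple j) = cs.length z + 2) :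
    semiperimeter cs z y ≤
      semiperimeter cs (cs.simple i * z * cs.simple j) (y * cs.simple i) := by
  have hyz : y * cs.simple i * (cs.simple i * z * cs.simple j) = y * z * cs.simple j := by
    simp only [mul_assoc, cs.simple_mul_simple_cancel_left]
  have hlen := cs.length_mul_simple (y * z) j
  rw [cs.isRightDescent_iff] at hy
  simp only [semiperimeter, hyz]
  omega

theorem semiperimeter_le_two_add_simple_mul_mul_simple (hy : cs.IsRightDescent y i) :
    semiperimeter cs z y ≤
      2 + semiperimeter cs (cs.simple i * z * cs.simple j) (y * cs.simple i) := by
  have hyz : y * cs.simple i * (cs.simple i * z * cs.simple j) = y * z * cs.simple j := by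
    simp only [mul_assoc, cs.simple_mul_simple_cancel_left]
  have hlen := cs.length_mul_simple (y * z) j
  have hz := cs.length_simple_mul z i
  have hzj := cs.length_mul_simple (cs.simple i * z) j
  rw [cs.isRightDescent_iff] at hy
  simp only [semiperimeter, hyz]
  omega

end Semiperimeter

section Recursion

theorem pow_dvd_mul_of_le_add {R : Type*} [CommMonoid R] {x p q : R} {k m n : ℕ}
    (hn : n ≤ k + m) (hq : x ^ k ∣ q) (hp : x ^ m ∣ p) : x ^ n ∣ q * p :=
  (pow_dvd_pow x hn).trans (pow_add x k m ▸ mul_dvd_mul hq hp)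

variable {B W : Type} [Group W] {M : CoxeterMatrix B} {cs : CoxeterSystem M W} {st : W ≃* W}
  {P : {z : W // st z = z⁻¹} → W → Polynomial ℤ} {i : B} {y : W}

theorem XRec.pow_semiperimeter_dvd_of_commute
    (hst_S : ∀ i : B, ∃ j : B, st (cs.simple i) = cs.simple j) (hP : XRec cs st P)
    (hy : cs.IsRightDescent y i)
    (ih : ∀ z, X ^ semiperimeter cs z.1 (y * cs.simple i) ∣ P z (y * cs.simple i))
    (z : {z : W // st z = z⁻¹}) (hcomm : cs.simple i * z.1 = z.1 * st (cs.simple i)) :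
    X ^ semiperimeter cs z.1 y ∣ P z y := by
  have hsz : st (cs.simple i * z.1) = (cs.simple i * z.1)⁻¹ :=
    map_mul_eq_inv_of_commute (σ := st.toMonoidHom) (cs.inv_simple i) z.2 hcomm
  obtain ⟨hascent, hdescent, -, -⟩ := hP.2 i y hy z
  by_cases hz : cs.IsLeftDescent z.1 i
  · rw [hdescent hcomm hz hsz]
    exact dvd_add ((pow_dvd_pow X (semiperimeter_le_of_isLeftDescent hy hz)).trans
        ((ih z).mul_left _))
      (pow_dvd_mul_of_le_add (semiperimeter_le_one_add_simple_mul hy) ⟨X - 1, by ring⟩ (ih _))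
  · have hlt := (Nat.lt_succ_self _).trans_eq (cs.not_isLeftDescent_iff.1 hz).symm
    obtain ⟨j, hj⟩ := hst_S i
    rw [hascent hcomm hlt hsz]
    exact dvd_add
      (pow_dvd_mul_of_le_add (semiperimeter_le_add_one_of_commute hy (hj ▸ hcomm))
        (by rw [pow_one]) (ih z))
      ((pow_dvd_pow X (semiperimeter_le_simple_mul hy hz)).trans ((ih ⟨_, hsz⟩).mul_left _))

theorem XRec.pow_semiperimeter_dvd_of_not_commute (hst_inv : ∀ w, st (st w) = w)
    (hst_S : ∀ i : B, ∃ j : B, st (cs.simple i) = cs.simple j) (hP : XRec cs st P)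
    (hy : cs.IsRightDescent y i)
    (ih : ∀ z, X ^ semiperimeter cs z.1 (y * cs.simple i) ∣ P z (y * cs.simple i))
    (z : {z : W // st z = z⁻¹}) (hne : cs.simple i * z.1 ≠ z.1 * st (cs.simple i)) :
    X ^ semiperimeter cs z.1 y ∣ P z y := by
  have hszs : st (cs.simple i * z.1 * st (cs.simple i)) =
      (cs.simple i * z.1 * st (cs.simple i))⁻¹ :=
    map_mul_mul_map_eq_inv (σ := st.toMonoidHom) (cs.inv_simple i) (hst_inv _) z.2
  obtain ⟨-, -, hascent, hdescent⟩ := hP.2 i y hy z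
  obtain ⟨j, hj⟩ := hst_S i
  by_cases hz : cs.IsLeftDescent z.1 i
  · have hle := semiperimeter_le_two_add_simple_mul_mul_simple (z := z.1) (j := j) hy
    rw [← hj] at hle
    rw [hdescent hne hz hszs]
    exact dvd_add ((pow_dvd_pow X (semiperimeter_le_of_isLeftDescent hy hz)).trans
        ((ih z).mul_left _))
      (pow_dvd_mul_of_le_add hle dvd_rfl (ih ⟨_, hszs⟩))
  · have hlt := (Nat.lt_succ_self _).trans_eq (cs.not_isLeftDescent_iff.1 hz).symm
    have hlen := length_twistedConj hst_inv hst_S z.2 hne hz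
    have hle := semiperimeter_le_simple_mul_mul_simple hy (hj ▸ hlen)
    rw [← hj] at hle
    rw [hascent hne hlt hszs]
    exact (pow_dvd_pow X hle).trans (ih ⟨_, hszs⟩)

end Recursion

theorem statement15_general {B W : Type} [Group W] {M : CoxeterMatrix B}
    (cs : CoxeterSystem M W) (st : W ≃* W)
    (hst_inv : ∀ w, st (st w) = w)
    (hst_S : ∀ i : B, ∃ j : B, st (cs.simple i) = cs.simple j)
    (P : {z : W // st z = z⁻¹} → W → Polynomial ℤ) (hP : XRec cs st P)
    (z : {z : W // st z = z⁻¹}) (y : W) :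
    X ^ semiperimeter cs z.1 y ∣ P z y := by
  induction y using rightDescent_induction (cs := cs) generalizing z with
  | one =>
    rw [hP.1 z]
    split_ifs with hz
    · simp [semiperimeter, hz]
    · exact dvd_zero _
  | descent y i hy ih =>
    by_cases hcomm : cs.simple i * z.1 = z.1 * st (cs.simple i)
    · exact hP.pow_semiperimeter_dvd_of_commute hst_S hy ih z hcomm
    · exact hP.pow_semiperimeter_dvd_of_not_commute hst_inv hst_S hy ih z hcomm

/-- **Proposition 1.9.** For every `(z, y) ∈ I_* × W`, the polynomial `X^z_y`
is divisible by `u^{l(y)}`, hence by `u^{max(l(z), l(y))}`. -/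
theorem statement15 {B W : Type} [Group W] [Finite B] {M : CoxeterMatrix B}
    (cs : CoxeterSystem M W) (st : W ≃* W)
    (hst_inv : ∀ w, st (st w) = w)
    (hst_S : ∀ i : B, ∃ j : B, st (cs.simple i) = cs.simple j)
    (P : {z : W // st z = z⁻¹} → W → Polynomial ℤ) (hP : XRec cs st P)
    (z : {z : W // st z = z⁻¹}) (y : W) :
    X ^ cs.length y ∣ P z y ∧ X ^ max (cs.length z.1) (cs.length y) ∣ P z y := by
  have h := (pow_dvd_pow X (max_length_le_semiperimeter z.1 y)).trans
    (statement15_general cs st hst_inv hst_S P hP z y)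
  exact ⟨(pow_dvd_pow X (le_max_right _ _)).trans h, h⟩
end
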